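/- Let b ≥ 2 be an integer and λ ∈ (1/b, 1), and assume that h_b(μ) < 0 for all μ ∈ [λ, 1). Then the graph {(x, W_{λ,b}(x)) : x ∈ [0,1)} of the classical Weierstrass function W_{λ,b} has Hausdorff dimension 2 + log λ / log b. -/

import Mathlib

open MeasureTheory Real Set Filter

noncomputable section

/-- The classical Weierstrass function `W_{λ,b}(x) = Σ_{n≥0} λ^n cos(2π b^n x)`. -/
def Wc (b : ℕ) (l : ℝ) (x : ℝ) : ℝ := ∑' n : ℕ, l ^ n * Real.cos (2 * π * (b : ℝ) ^ n * x)

/-- The function `h_b` of Barański–Bárány–Romanowska whose unique zero on `(1/b, 1)` is `λ_b`. -/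
def hBBR (b : ℕ) (l : ℝ) : ℝ :=
  if b = 2 then
    1 / (4 * l ^ 2 * (2 * l - 1) ^ 2) + 1 / (16 * l ^ 2 * (4 * l - 1) ^ 2)
      - 5 / (64 * l ^ 2) + Real.sqrt 2 / (2 * l) - 1
  else
    1 / ((b : ℝ) * l - 1) ^ 2 + 1 / ((b : ℝ) ^ 2 * l - 1) ^ 2 - Real.sin (π / b) ^ 2

/-!
Zooming in `n` times along the branch `p` of `x ↦ b x mod 1` turns the graph into the graph of
`W_{λ,b}` plus a smooth function, so a graph ball of radius `(c / b) ^ n`, with `c = 1 / (b λ)`,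
becomes the part of the graph in a thin strip whose direction is the strong stable slope of `p`. If
`h_b(λ) < 0`, these slopes are transversal: two branches with different last digit never have
nearly equal slopes and nearly equal derivatives of slopes at the same point. Hence few pairs of
branches have close slopes at a typical point, so that the strips through a common point mostly
have very different directions and meet only in a small piece of the graph. Bounding the mass of
those pieces by the dimension estimate already known at a coarser scale improves that estimate, and
the iteration, started at the trivial local dimension `1`, converges to `D = 2 + log λ / log b`.
The mass distribution principle then gives the lower bound for the Hausdorff dimension; the upper
bound is that of the graph of a `(2 - D)`-Hölder function.
-/

/-! ### Lacunary sums -/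

theorem sum_pow_succ_le {x : ℝ} (h0 : 0 ≤ x) (h1 : x < 1) (n : ℕ) :
    ∑ j ∈ Finset.range n, x ^ (j + 1) ≤ x / (1 - x) := by
  have := (summable_geometric_of_lt_one h0 h1).sum_le_tsum (Finset.range n) fun i _ => by positivity
  rw [tsum_geometric_of_lt_one h0 h1] at this
  simp_rw [pow_succ', ← Finset.mul_sum, div_eq_mul_inv]
  gcongr

theorem abs_sub_sub_mul_le_sq {f f' : ℝ → ℝ} {K : ℝ} (hf : ∀ x, HasDerivAt f (f' x) x)
    (hf' : ∀ x y, |f' y - f' x| ≤ K * |y - x|) (x y : ℝ) :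
    |f y - f x - f' x * (y - x)| ≤ K * (y - x) ^ 2 := by
  have hK : 0 ≤ K := by simpa using (abs_nonneg _).trans (hf' 0 1)
  have hderiv (t : ℝ) : HasDerivAt (fun s => f s - f' x * s) (f' t - f' x) t := by
    simpa using (hf t).fun_sub ((hasDerivAt_id t).const_mul (f' x))
  have hbound (t : ℝ) (ht : t ∈ uIcc x y) : |f' t - f' x| ≤ K * |y - x| :=
    (hf' x t).trans (mul_le_mul_of_nonneg_left (abs_sub_left_of_mem_uIcc ht) hK)
  calc |f y - f x - f' x * (y - x)| = ‖(f y - f' x * y) - (f x - f' x * x)‖ := by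
        rw [Real.norm_eq_abs]; ring_nf
    _ ≤ K * |y - x| * ‖y - x‖ :=
        (convex_uIcc x y).norm_image_sub_le_of_norm_hasDerivWithin_le
          (fun t _ => (hderiv t).hasDerivWithinAt) hbound left_mem_uIcc right_mem_uIcc
    _ = K * (y - x) ^ 2 := by rw [Real.norm_eq_abs, mul_assoc, abs_mul_abs_self, sq]

/-- The finite lacunary sum `∑_{1 ≤ j ≤ n} x ^ j f (2πt / b ^ j)`. For `f = cos` it is the smooth
function by which the rescaled Weierstrass function differs from itself on an interval of level
`n`; the derivatives of that function are again of this form. -/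
def lacunarySum (f : ℝ → ℝ) (b x : ℝ) (n : ℕ) (t : ℝ) : ℝ :=
  ∑ j ∈ Finset.range n, x ^ (j + 1) * f (2 * π * t / b ^ (j + 1))

section lacunarySum

variable {f : ℝ → ℝ} {b x : ℝ}

theorem lacunarySum_one (f : ℝ → ℝ) (b x t : ℝ) :
    lacunarySum f b x 1 t = x * f (2 * π * t / b) := by
  simp [lacunarySum]

theorem lacunarySum_add (f : ℝ → ℝ) (b x : ℝ) (k n : ℕ) (t : ℝ) :
    lacunarySum f b x (k + n) t
      = lacunarySum f b x k t + x ^ k * lacunarySum f b x n (t / b ^ k) := by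
  simp only [lacunarySum, Finset.sum_range_add, Finset.mul_sum, ← mul_assoc, ← pow_add, add_assoc]
  congr! 4
  rw [pow_add b k, ← div_div, ← mul_div_assoc]

theorem lacunarySum_neg (f : ℝ → ℝ) (b x : ℝ) (n : ℕ) (t : ℝ) :
    lacunarySum (fun y => -f y) b x n t = -lacunarySum f b x n t := by
  simp only [lacunarySum, mul_neg, Finset.sum_neg_distrib]

theorem abs_lacunarySum_le (hf : ∀ y, |f y| ≤ 1) (h0 : 0 ≤ x) (h1 : x < 1) (n : ℕ) (t : ℝ) :
    |lacunarySum f b x n t| ≤ x / (1 - x) := by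
  refine (Finset.abs_sum_le_sum_abs _ _).trans
    ((Finset.sum_le_sum fun j _ => ?_).trans (sum_pow_succ_le h0 h1 n))
  rw [abs_mul, abs_of_nonneg (by positivity)]
  exact mul_le_of_le_one_right (by positivity) (hf _)

theorem hasDerivAt_lacunarySum {f' : ℝ → ℝ} (hf : ∀ y, HasDerivAt f (f' y) y) (n : ℕ) (t : ℝ) :
    HasDerivAt (lacunarySum f b x n) (2 * π * lacunarySum f' b (x / b) n t) t := by
  have hterm (j : ℕ) : HasDerivAt (fun s => x ^ (j + 1) * f (2 * π * s / b ^ (j + 1)))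
      (x ^ (j + 1) * (f' (2 * π * t / b ^ (j + 1)) * (2 * π / b ^ (j + 1)))) t := by
    have hinner : HasDerivAt (fun s => 2 * π * s / b ^ (j + 1)) (2 * π / b ^ (j + 1)) t := by
      simpa using ((hasDerivAt_id t).const_mul (2 * π)).div_const (b ^ (j + 1))
    exact ((hf _).comp t hinner).const_mul _
  refine (HasDerivAt.fun_sum fun j (_ : j ∈ Finset.range n) => hterm j).congr_deriv ?_
  rw [lacunarySum, Finset.mul_sum]
  refine Finset.sum_congr rfl fun j _ => ?_
  rw [div_pow]
  ring

theorem abs_lacunarySum_sub_le {f' : ℝ → ℝ} (hf : ∀ y, HasDerivAt f (f' y) y)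
    (hf' : ∀ y, |f' y| ≤ 1) (h0 : 0 ≤ x / b) (h1 : x / b < 1) (n : ℕ) (s t : ℝ) :
    |lacunarySum f b x n t - lacunarySum f b x n s|
      ≤ 2 * π * (x / b / (1 - x / b)) * |t - s| := by
  refine convex_univ.norm_image_sub_le_of_norm_hasDerivWithin_le
    (fun u _ => (hasDerivAt_lacunarySum hf n u).hasDerivWithinAt) (fun u _ => ?_)
    (mem_univ s) (mem_univ t)
  rw [Real.norm_eq_abs, abs_mul, abs_of_pos two_pi_pos]
  exact mul_le_mul_of_nonneg_left (abs_lacunarySum_le hf' h0 h1 n u) two_pi_pos.le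

theorem abs_lacunarySum_sub_le_of_div_le_half {f' : ℝ → ℝ} (hf : ∀ y, HasDerivAt f (f' y) y)
    (hf' : ∀ y, |f' y| ≤ 1) (h0 : 0 ≤ x / b) (h1 : x / b ≤ 1 / 2) (n : ℕ) (s t : ℝ) :
    |lacunarySum f b x n t - lacunarySum f b x n s| ≤ 2 * π * |t - s| := by
  refine (abs_lacunarySum_sub_le hf hf' h0 (by linarith) n s t).trans ?_
  have : x / b / (1 - x / b) ≤ 1 := div_le_one_of_le₀ (by linarith) (by linarith)
  exact mul_le_mul_of_nonneg_right (mul_le_of_le_one_right two_pi_pos.le this) (abs_nonneg _)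

end lacunarySum

/-! ### The Weierstrass function -/

section Wc

variable (b : ℕ) {l : ℝ}

theorem abs_pow_mul_cos_le (h0 : 0 ≤ l) (n : ℕ) (y : ℝ) : |l ^ n * cos y| ≤ l ^ n := by
  rw [abs_mul, abs_of_nonneg (pow_nonneg h0 n)]
  exact mul_le_of_le_one_right (by positivity) (abs_cos_le_one _)

theorem continuous_Wc (h0 : 0 ≤ l) (h1 : l < 1) : Continuous (Wc b l) :=
  continuous_tsum (fun _ => by fun_prop) (summable_geometric_of_lt_one h0 h1)
    fun n _ => abs_pow_mul_cos_le h0 n _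

theorem abs_Wc_le (h0 : 0 ≤ l) (h1 : l < 1) (x : ℝ) : |Wc b l x| ≤ (1 - l)⁻¹ := by
  rw [← Real.norm_eq_abs]
  exact tsum_of_norm_bounded (hasSum_geometric_of_lt_one h0 h1) fun n => abs_pow_mul_cos_le h0 n _

theorem Wc_natCast_add (l : ℝ) (p : ℕ) (x : ℝ) : Wc b l (p + x) = Wc b l x := by
  unfold Wc
  congr! 3 with n
  rw [show 2 * π * (b : ℝ) ^ n * (p + x)
    = 2 * π * (b : ℝ) ^ n * x + ((b ^ n * p : ℕ) : ℝ) * (2 * π) by push_cast; ring,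
    cos_add_nat_mul_two_pi]

theorem Wc_eq_cos_add (h0 : 0 ≤ l) (h1 : l < 1) (x : ℝ) :
    Wc b l x = cos (2 * π * x) + l * Wc b l (b * x) := by
  have hsum : Summable fun n : ℕ => l ^ n * cos (2 * π * (b : ℝ) ^ n * x) :=
    .of_norm_bounded (summable_geometric_of_lt_one h0 h1) fun n => abs_pow_mul_cos_le h0 n _
  rw [Wc, hsum.tsum_eq_zero_add, Wc, ← tsum_mul_left, pow_zero, one_mul, pow_zero, mul_one]
  congr 2
  ext n
  rw [pow_succ' l, mul_assoc]
  congr 3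
  ring

variable {b}

theorem Wc_div_pow (hb : b ≠ 0) (h0 : 0 < l) (h1 : l < 1) (n : ℕ) (t : ℝ) :
    Wc b l (t / (b : ℝ) ^ n) = l ^ n * (lacunarySum cos b l⁻¹ n t + Wc b l t) := by
  induction n with
  | zero => simp [lacunarySum]
  | succ n ih =>
    have hscale : (b : ℝ) * (t / (b : ℝ) ^ (n + 1)) = t / (b : ℝ) ^ n := by
      have : (b : ℝ) ≠ 0 := by exact_mod_cast hb
      rw [pow_succ', ← mul_div_assoc, mul_div_mul_left _ _ this]
    have hl : l ^ (n + 1) * l⁻¹ ^ (n + 1) = 1 := by rw [← mul_pow, mul_inv_cancel₀ h0.ne', one_pow]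
    rw [Wc_eq_cos_add b h0.le h1, hscale, ih, lacunarySum, lacunarySum, Finset.sum_range_succ,
      mul_div_assoc]
    linear_combination -cos (2 * π * (t / (b : ℝ) ^ (n + 1))) * hl

end Wc

/-! ### Slopes of the rescaled function -/

/-- The slope of the strong stable curve at level `n`, that is, minus the derivative of the smooth
part `lacunarySum cos b (b * c) n` of the rescaled function. The parameter `c` stands for
`(b * l)⁻¹`. -/
def strongSlope (b c : ℝ) (n : ℕ) (t : ℝ) : ℝ :=
  2 * π * lacunarySum sin b c n t

/-- The derivative of `strongSlope`. -/
def curvature (b c : ℝ) (n : ℕ) (t : ℝ) : ℝ :=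
  (2 * π) ^ 2 * lacunarySum cos b (c / b) n t

section strongSlope

variable {b c : ℝ}

theorem hasDerivAt_lacunarySum_cos (hb : b ≠ 0) (n : ℕ) (t : ℝ) :
    HasDerivAt (lacunarySum cos b (b * c) n) (-strongSlope b c n t) t := by
  refine (hasDerivAt_lacunarySum hasDerivAt_cos n t).congr_deriv ?_
  rw [mul_div_cancel_left₀ c hb, lacunarySum_neg, strongSlope, mul_neg]

theorem hasDerivAt_strongSlope (n : ℕ) (t : ℝ) :
    HasDerivAt (strongSlope b c n) (curvature b c n t) t := by
  refine ((hasDerivAt_lacunarySum hasDerivAt_sin n t).const_mul (2 * π)).congr_deriv ?_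
  rw [curvature]
  ring

theorem continuous_strongSlope (b c : ℝ) (n : ℕ) : Continuous (strongSlope b c n) :=
  continuous_iff_continuousAt.2 fun t => (hasDerivAt_strongSlope n t).continuousAt

theorem abs_strongSlope_le (h0 : 0 ≤ c) (h1 : c < 1) (n : ℕ) (t : ℝ) :
    |strongSlope b c n t| ≤ 2 * π * (c / (1 - c)) := by
  rw [strongSlope, abs_mul, abs_of_pos two_pi_pos]
  gcongr
  exact abs_lacunarySum_le abs_sin_le_one h0 h1 n t

theorem abs_strongSlope_sub_le (hb : 2 ≤ b) (h0 : 0 ≤ c) (h1 : c ≤ 1) (n : ℕ) (s t : ℝ) :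
    |strongSlope b c n t - strongSlope b c n s| ≤ (2 * π) ^ 2 * |t - s| := by
  have hcb : c / b ≤ 1 / 2 := by
    rw [div_le_iff₀ (by positivity)]
    linarith
  have := abs_lacunarySum_sub_le_of_div_le_half hasDerivAt_sin abs_cos_le_one (by positivity) hcb
    n s t
  rw [strongSlope, strongSlope, ← mul_sub, abs_mul, abs_of_pos two_pi_pos, sq (2 * π),
    mul_assoc (2 * π)]
  exact mul_le_mul_of_nonneg_left this two_pi_pos.le

theorem abs_curvature_sub_le (hb : 2 ≤ b) (h0 : 0 ≤ c) (h1 : c ≤ 1) (n : ℕ) (s t : ℝ) :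
    |curvature b c n t - curvature b c n s| ≤ (2 * π) ^ 3 * |t - s| := by
  have hcb : c / b / b ≤ 1 / 2 := by
    rw [div_div, div_le_iff₀ (by positivity)]
    nlinarith
  have := abs_lacunarySum_sub_le_of_div_le_half hasDerivAt_cos
    (fun y => (abs_neg _).trans_le (abs_sin_le_one y)) (by positivity) hcb n s t
  rw [curvature, curvature, ← mul_sub, abs_mul, abs_of_pos (by positivity), pow_succ _ 2, mul_assoc]
  gcongr

theorem abs_lacunarySum_cos_sub_add_le (hb : 2 ≤ b) (h0 : 0 ≤ c) (h1 : c ≤ 1) (n : ℕ) (s t : ℝ) :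
    |lacunarySum cos b (b * c) n t - lacunarySum cos b (b * c) n s + strongSlope b c n s * (t - s)|
      ≤ (2 * π) ^ 2 * (t - s) ^ 2 := by
  have hlip (s t : ℝ) :
      |-strongSlope b c n t - -strongSlope b c n s| ≤ (2 * π) ^ 2 * |t - s| := by
    rw [neg_sub_neg, abs_sub_comm]
    exact abs_strongSlope_sub_le hb h0 h1 n s t
  have := abs_sub_sub_mul_le_sq
    (hasDerivAt_lacunarySum_cos (c := c) (show b ≠ 0 by positivity) n) hlip s t
  rwa [neg_mul, sub_neg_eq_add] at this

end strongSlope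

/-! ### Transversality -/

/-- Transversality: the slopes over a point `u` coming from branches with different last digit are
not tangent, uniformly in the point and in the level. -/
def IsTransversal (b : ℕ) (c : ℝ) : Prop :=
  ∃ ε > 0, ∀ᶠ n in atTop, ∀ p q : ℕ, p % b ≠ q % b → ∀ u : ℝ,
    ε ≤ |strongSlope b c n (p + u) - strongSlope b c n (q + u)|
      ∨ ε ≤ |curvature b c n (p + u) - curvature b c n (q + u)|

theorem exists_forall_le_abs_add_or_le_abs_add {T₁ T₂ m : ℝ} (h : T₁ ^ 2 + T₂ ^ 2 < m) :
    ∃ ε > 0, ∀ A B t₁ t₂ : ℝ, m ≤ A ^ 2 + B ^ 2 → |t₁| ≤ T₁ → |t₂| ≤ T₂ →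
      ε ≤ |A + t₁| ∨ ε ≤ |B + t₂| := by
  have hcont : Continuous fun ε : ℝ => (T₁ + ε) ^ 2 + (T₂ + ε) ^ 2 := by fun_prop
  have hnear : ∀ᶠ ε in nhds (0 : ℝ), (T₁ + ε) ^ 2 + (T₂ + ε) ^ 2 < m :=
    (hcont.tendsto 0).eventually (gt_mem_nhds (by simpa using h))
  obtain ⟨ε, hεm, hε⟩ :=
    ((hnear.filter_mono (nhdsWithin_le_nhds (s := Ioi 0))).and self_mem_nhdsWithin).exists
  refine ⟨ε, hε, fun A B t₁ t₂ hm ht₁ ht₂ => ?_⟩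
  by_contra! hlt
  have hsq {a t T : ℝ} (ht : |t| ≤ T) (ha : |a + t| < ε) : a ^ 2 ≤ (T + ε) ^ 2 := by
    rw [abs_le] at ht
    rw [abs_lt] at ha
    exact sq_le_sq' (by linarith) (by linarith)
  linarith [hsq ht₁ hlt.1, hsq ht₂ hlt.2]

theorem abs_pow_mul_lacunarySum_sub_div_le {f : ℝ → ℝ} {x : ℝ} (hf : ∀ y, |f y| ≤ 1) (h0 : 0 < x)
    (h1 : x < 1) (b : ℝ) (k n : ℕ) (s t : ℝ) :
    |x ^ k * (lacunarySum f b x n s - lacunarySum f b x n t) / x| ≤ 2 * (x ^ k / (1 - x)) := by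
  have hsub : |lacunarySum f b x n s - lacunarySum f b x n t| ≤ 2 * (x / (1 - x)) := by
    linarith [abs_sub (lacunarySum f b x n s) (lacunarySum f b x n t),
      abs_lacunarySum_le (b := b) hf h0.le h1 n s, abs_lacunarySum_le (b := b) hf h0.le h1 n t]
  rw [abs_div, abs_mul, abs_of_pos h0, abs_of_pos (pow_pos h0 k), div_le_iff₀ h0]
  exact (mul_le_mul_of_nonneg_left hsub (by positivity)).trans_eq (by ring)

theorem isTransversal_of_forall_le {b : ℕ} {c m : ℝ} (hb : 0 < b) (h0 : 0 < c) (h1 : c < 1) (k : ℕ)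
    (htail : (2 * (c ^ k / (1 - c))) ^ 2 + (2 * ((c / b) ^ k / (1 - c / b))) ^ 2 < m)
    (hm : ∀ p q : ℕ, p % b ≠ q % b → ∀ u : ℝ,
      m ≤ ((lacunarySum sin b c k (p + u) - lacunarySum sin b c k (q + u)) / c) ^ 2
        + ((lacunarySum cos b (c / b) k (p + u) - lacunarySum cos b (c / b) k (q + u))
            / (c / b)) ^ 2) :
    IsTransversal b c := by
  have hb1 : (1 : ℝ) ≤ b := by exact_mod_cast hb
  have he0 : 0 < c / b := by positivity
  have he1 : c / b < 1 := (div_le_self h0.le hb1).trans_lt h1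
  obtain ⟨ε, hε, hor⟩ := exists_forall_le_abs_add_or_le_abs_add htail
  refine ⟨min (2 * π * c * ε) ((2 * π) ^ 2 * (c / b) * ε), by positivity, ?_⟩
  filter_upwards [eventually_ge_atTop k] with n hkn p q hpq u
  obtain ⟨n, rfl⟩ := Nat.exists_eq_add_of_le hkn
  have hsplit (f : ℝ → ℝ) {x : ℝ} (hx : 0 < x) :
      lacunarySum f b x (k + n) (p + u) - lacunarySum f b x (k + n) (q + u)
        = x * ((lacunarySum f b x k (p + u) - lacunarySum f b x k (q + u)) / x
          + x ^ k * (lacunarySum f b x n ((p + u) / (b : ℝ) ^ k)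
            - lacunarySum f b x n ((q + u) / (b : ℝ) ^ k)) / x) := by
    rw [lacunarySum_add, lacunarySum_add]
    field_simp
    ring
  simp only [strongSlope, curvature, ← mul_sub]
  rw [hsplit sin h0, hsplit cos he0, ← mul_assoc, ← mul_assoc, abs_mul, abs_mul (_ * (c / b)),
    abs_of_pos (by positivity : 0 < 2 * π * c),
    abs_of_pos (by positivity : 0 < (2 * π) ^ 2 * (c / b))]
  refine Or.imp (fun h => ?_) (fun h => ?_) (hor _ _ _ _ (hm p q hpq u)
    (abs_pow_mul_lacunarySum_sub_div_le abs_sin_le_one h0 h1 b k n ((p + u) / (b : ℝ) ^ k)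
      ((q + u) / (b : ℝ) ^ k))
    (abs_pow_mul_lacunarySum_sub_div_le abs_cos_le_one he0 he1 b k n ((p + u) / (b : ℝ) ^ k)
      ((q + u) / (b : ℝ) ^ k)))
  · exact (min_le_left _ _).trans (by gcongr)
  · exact (min_le_right _ _).trans (by gcongr)

theorem sin_pi_div_sq_le {b : ℕ} (hb : 0 < b) {k : ℤ} (hk : ¬(b : ℤ) ∣ k) :
    sin (π / b) ^ 2 ≤ sin (π * k / b) ^ 2 := by
  have hb0 : (0 : ℝ) < b := by exact_mod_cast hb
  set r : ℤ := k.bmod b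
  have hk_eq : (k : ℝ) = r + b * (k.bdiv b : ℤ) := by exact_mod_cast (Int.bmod_add_bdiv k b).symm
  have hr1 : (1 : ℝ) ≤ |(r : ℝ)| := by
    exact_mod_cast Int.one_le_abs fun h => hk (Int.dvd_iff_bmod_eq_zero.2 h)
  have hr2 : 2 * |(r : ℝ)| ≤ b := by
    have hlt := Int.bmod_lt (x := k) hb
    have hle := Int.le_bmod (x := k) hb
    have habs : 2 * |r| ≤ b := by
      rcases abs_cases r with ⟨h, -⟩ | ⟨h, -⟩ <;> omega
    exact_mod_cast habs
  have hcos : cos (2 * (π * k / b)) = cos (2 * π * |(r : ℝ)| / b) := by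
    have hangle : 2 * (π * k / b) = 2 * π * r / b + (k.bdiv b : ℤ) * (2 * π) := by
      rw [hk_eq]
      field_simp
    rw [hangle, cos_add_int_mul_two_pi, ← cos_abs, abs_div, abs_mul, abs_of_pos two_pi_pos,
      Nat.abs_cast]
  have hle : cos (2 * (π * k / b)) ≤ cos (2 * (π / b)) := by
    rw [hcos]
    refine cos_le_cos_of_nonneg_of_le_pi (by positivity) ?_ ?_
    · rw [div_le_iff₀ hb0]
      nlinarith [pi_pos]
    · rw [← mul_div_assoc]
      exact div_le_div_of_nonneg_right (le_mul_of_one_le_right two_pi_pos.le hr1) hb0.le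
  rw [sin_sq_eq_half_sub, sin_sq_eq_half_sub]
  linarith

theorem four_mul_sin_sq_le {b : ℕ} (hb : 0 < b) {c : ℝ} (h0 : 0 < c) {p q : ℕ}
    (h : p % b ≠ q % b) (u : ℝ) :
    4 * sin (π / b) ^ 2
      ≤ ((lacunarySum sin b c 1 (p + u) - lacunarySum sin b c 1 (q + u)) / c) ^ 2
        + ((lacunarySum cos b (c / b) 1 (p + u) - lacunarySum cos b (c / b) 1 (q + u))
            / (c / b)) ^ 2 := by
  have hdvd : ¬(b : ℤ) ∣ (p - q : ℤ) := fun hd =>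
    h (Int.natCast_modEq_iff.1 (Int.modEq_iff_dvd.2 hd)).symm
  have hsin := sin_pi_div_sq_le hb hdvd
  set x := 2 * π * (p + u) / b with hx
  set y := 2 * π * (q + u) / b with hy
  have hchord : (sin x - sin y) ^ 2 + (cos x - cos y) ^ 2 = 4 * sin ((x - y) / 2) ^ 2 := by
    rw [sin_sub_sin, cos_sub_cos]
    linear_combination 4 * sin ((x - y) / 2) ^ 2 * sin_sq_add_cos_sq ((x + y) / 2)
  have hxy : (x - y) / 2 = π * ((p - q : ℤ) : ℝ) / b := by
    push_cast
    rw [hx, hy]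
    ring
  simp only [lacunarySum_one, ← mul_sub]
  rw [mul_div_cancel_left₀ _ h0.ne', mul_div_cancel_left₀ _ (by positivity), hchord, hxy]
  linarith

theorem isTransversal_of_three_le {b : ℕ} (hb : 3 ≤ b) {c : ℝ} (h0 : 0 < c) (h1 : c < 1)
    (hneg : hBBR b (b * c)⁻¹ < 0) : IsTransversal b c := by
  have hb3 : (3 : ℝ) ≤ b := by exact_mod_cast hb
  refine isTransversal_of_forall_le (by omega) h0 h1 1 ?_
    fun p q hpq u => four_mul_sin_sq_le (by omega) h0 hpq u
  have h1c : 1 / ((b : ℝ) * (b * c)⁻¹ - 1) ^ 2 = (c / (1 - c)) ^ 2 := by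
    rw [show (b : ℝ) * (b * c)⁻¹ - 1 = (1 - c) / c by field_simp, div_pow, one_div_div, div_pow]
  have h1e : 1 / ((b : ℝ) ^ 2 * (b * c)⁻¹ - 1) ^ 2 = ((c / b) / (1 - c / b)) ^ 2 := by
    rw [show (b : ℝ) ^ 2 * (b * c)⁻¹ - 1 = (1 - c / b) / (c / b) by field_simp,
      div_pow (1 - c / b), one_div_div, ← div_pow]
  rw [hBBR, if_neg (by omega), h1c, h1e] at hneg
  rw [pow_one, pow_one]
  linarith

theorem trig_sum_sq_ge {s k c : ℝ} (h : s ^ 2 + k ^ 2 = 1) (h0 : 0 ≤ c) (h1 : c ≤ 1) :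
    1 - √2 * c + 5 * c ^ 2 / 16
      ≤ (2 * s * k + c / 2 * (s - k)) ^ 2 + (k ^ 2 - s ^ 2 + c / 4 * (k + s)) ^ 2 := by
  set w := s - k with hw
  have hsqrt : √2 ^ 2 = 2 := Real.sq_sqrt zero_le_two
  have hsqrt_ge : 1.4 ≤ √2 := Real.le_sqrt_of_sq_le (by norm_num)
  have hwle : w ≤ √2 := Real.le_sqrt_of_sq_le (by nlinarith [sq_nonneg (s + k)])
  have hsum : (2 * s * k + c / 2 * w) ^ 2 + (k ^ 2 - s ^ 2 + c / 4 * (k + s)) ^ 2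
      = 1 + c * (-w ^ 3 / 2 - 3 * c / 16 * (1 - w ^ 2)) + 5 * c ^ 2 / 16 := by
    have hsk : 2 * s * k = 1 - w ^ 2 := by rw [hw]; linear_combination h
    have hks : (k + s) ^ 2 = 2 - w ^ 2 := by rw [hw]; linear_combination 2 * h
    rw [show k ^ 2 - s ^ 2 + c / 4 * (k + s) = (k + s) * (c / 4 - w) by rw [hw]; ring, mul_pow,
      hks, hsk]
    ring
  have hlower : -√2 ≤ -w ^ 3 / 2 - 3 * c / 16 * (1 - w ^ 2) := by
    rcases le_or_gt 1 (w ^ 2) with hw1 | hw1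
    · have hcube : 0 ≤ (√2 - w) * (2 + √2 * w + w ^ 2) :=
        mul_nonneg (by linarith) (by nlinarith [sq_nonneg (√2 + 2 * w)])
      nlinarith
    · have hwlt : w < 1 := by nlinarith
      have hcube : w ^ 3 ≤ 1 := by nlinarith [sq_nonneg w]
      have hc : c * (1 - w ^ 2) ≤ 1 := by nlinarith [sq_nonneg w]
      nlinarith
  rw [hsum]
  nlinarith

theorem sin_cos_quarter_turn {p q : ℕ} (h : p % 2 ≠ q % 2) (u : ℝ) :
    sin (π * (q + u) / 2) = cos (π * (p + u) / 2) ∧ cos (π * (q + u) / 2) = -sin (π * (p + u) / 2)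
    ∨ sin (π * (q + u) / 2) = -cos (π * (p + u) / 2)
      ∧ cos (π * (q + u) / 2) = sin (π * (p + u) / 2) := by
  obtain ⟨m, hm⟩ : ∃ m : ℤ, (q : ℤ) = p + 1 + 4 * m ∨ (q : ℤ) = p - 1 + 4 * m :=
    ⟨((q : ℤ) - p + 1) / 4, by omega⟩
  refine hm.imp (fun hq => ?_) fun hq => ?_
  · have hangle : π * (q + u) / 2 = π * (p + u) / 2 + π / 2 + m * (2 * π) := by
      rw [show (q : ℝ) = p + 1 + 4 * m by exact_mod_cast hq]
      ring
    rw [hangle, sin_add_int_mul_two_pi, cos_add_int_mul_two_pi, sin_add_pi_div_two,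
      cos_add_pi_div_two]
    exact ⟨rfl, rfl⟩
  · have hangle : π * (q + u) / 2 = π * (p + u) / 2 - π / 2 + m * (2 * π) := by
      rw [show (q : ℝ) = p - 1 + 4 * m by exact_mod_cast hq]
      ring
    rw [hangle, sin_add_int_mul_two_pi, cos_add_int_mul_two_pi, sin_sub_pi_div_two,
      cos_sub_pi_div_two]
    exact ⟨rfl, rfl⟩

theorem lacunarySum_two_two_div {x : ℝ} (hx : x ≠ 0) (f : ℝ → ℝ) (s t : ℝ) :
    (lacunarySum f (2 : ℕ) x 2 s - lacunarySum f (2 : ℕ) x 2 t) / x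
      = f (2 * (π * s / 2)) - f (2 * (π * t / 2)) + x * (f (π * s / 2) - f (π * t / 2)) := by
  have hterm (y : ℝ) :
      lacunarySum f (2 : ℕ) x 2 y = x * (f (2 * (π * y / 2)) + x * f (π * y / 2)) := by
    simp only [lacunarySum, Finset.sum_range_succ, Finset.sum_range_zero, Nat.cast_ofNat]
    rw [show 2 * π * y / 2 ^ (0 + 1) = 2 * (π * y / 2) by ring,
      show 2 * π * y / 2 ^ (1 + 1) = π * y / 2 by ring]
    ring
  rw [hterm, hterm, ← mul_sub, mul_div_cancel_left₀ _ hx]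
  ring

theorem four_mul_le_of_mod_two_ne {p q : ℕ} (h : p % 2 ≠ q % 2) {c : ℝ} (h0 : 0 < c) (h1 : c ≤ 1)
    (u : ℝ) :
    4 * (1 - √2 * c + 5 * c ^ 2 / 16)
      ≤ ((lacunarySum sin (2 : ℕ) c 2 (p + u) - lacunarySum sin (2 : ℕ) c 2 (q + u)) / c) ^ 2
        + ((lacunarySum cos (2 : ℕ) (c / (2 : ℕ)) 2 (p + u)
            - lacunarySum cos (2 : ℕ) (c / (2 : ℕ)) 2 (q + u)) / (c / (2 : ℕ))) ^ 2 := by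
  rw [lacunarySum_two_two_div h0.ne', lacunarySum_two_two_div (by positivity), Nat.cast_ofNat]
  have hunit := sin_sq_add_cos_sq (π * (p + u) / 2)
  simp only [sin_two_mul, cos_two_mul']
  rcases sin_cos_quarter_turn h u with ⟨hs, hk⟩ | ⟨hs, hk⟩
  · rw [hs, hk]
    linarith [trig_sum_sq_ge hunit h0.le h1]
  · rw [hs, hk]
    rw [← neg_sq (sin _)] at hunit
    linarith [trig_sum_sq_ge hunit h0.le h1]

theorem isTransversal_two {c : ℝ} (h0 : 0 < c) (h1 : c < 1)
    (hneg : hBBR 2 ((2 : ℕ) * c)⁻¹ < 0) : IsTransversal 2 c := by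
  refine isTransversal_of_forall_le two_pos h0 h1 2 ?_
    fun p q hpq u => four_mul_le_of_mod_two_ne hpq h0 h1.le u
  rw [hBBR, if_pos rfl] at hneg
  push_cast at hneg ⊢
  have hc1 : 1 - c ≠ 0 := by linarith
  have he1 : 1 - c / 2 ≠ 0 := by linarith
  have h1c : 1 / (4 * (2 * c)⁻¹ ^ 2 * (2 * (2 * c)⁻¹ - 1) ^ 2) = (c ^ 2 / (1 - c)) ^ 2 := by
    rw [show 2 * (2 * c)⁻¹ - 1 = (1 - c) / c by field_simp]
    field_simp
    norm_num
  have h1e : 1 / (16 * (2 * c)⁻¹ ^ 2 * (4 * (2 * c)⁻¹ - 1) ^ 2)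
      = ((c / 2) ^ 2 / (1 - c / 2)) ^ 2 := by
    rw [show 4 * (2 * c)⁻¹ - 1 = (1 - c / 2) / (c / 2) by field_simp; ring]
    field_simp
    norm_num
  have hquad : 5 / (64 * (2 * c)⁻¹ ^ 2) = 5 * c ^ 2 / 16 := by field_simp; norm_num
  have hlin : √2 / (2 * (2 * c)⁻¹) = √2 * c := by field_simp
  rw [h1c, h1e, hquad, hlin] at hneg
  linarith

theorem isTransversal_of_hBBR_neg {b : ℕ} (hb : 2 ≤ b) {c : ℝ} (h0 : 0 < c) (h1 : c < 1)
    (hneg : hBBR b (b * c)⁻¹ < 0) : IsTransversal b c := by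
  rcases hb.eq_or_lt with rfl | hb
  · exact isTransversal_two h0 h1 hneg
  · exact isTransversal_of_three_le hb h0 h1 hneg

/-! ### Inverse branches of multiplication by an integer -/

/-- Lebesgue measure on the unit interval. -/
abbrev unitVolume : Measure ℝ := volume.restrict (Ico 0 1)

instance isProbabilityMeasure_unitVolume : IsProbabilityMeasure unitVolume :=
  ⟨by simp⟩

theorem unitVolume_real_eq_intervalIntegral {S : Set ℝ} (hS : MeasurableSet S) :
    unitVolume.real S = ∫ u in (0 : ℝ)..1, S.indicator 1 u := by
  rw [intervalIntegral.integral_of_le zero_le_one, ← integral_Ico_eq_integral_Ioc,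
    integral_indicator_one hS]

theorem sum_unitVolume_real_branch {N : ℕ} (hN : 0 < N) {S : Set ℝ} (hS : MeasurableSet S) :
    ∑ p ∈ Finset.range N, unitVolume.real {u | (p + u) / N ∈ S} = N * unitVolume.real S := by
  have hN0 : (N : ℝ) ≠ 0 := by exact_mod_cast hN.ne'
  have hterm (p : ℕ) : unitVolume.real {u | (p + u) / N ∈ S}
      = N * ∫ x in (p / N : ℝ)..((p + 1 : ℕ) / N : ℝ), S.indicator 1 x := by
    have hmeas : MeasurableSet {u : ℝ | (p + u) / N ∈ S} :=
      hS.preimage (f := fun u : ℝ => (p + u) / N) (by fun_prop)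
    have hind : {u : ℝ | (p + u) / N ∈ S}.indicator (1 : ℝ → ℝ)
        = fun u => S.indicator 1 (p / N + u / N) := by
      ext u
      simp only [← add_div]
      rfl
    rw [unitVolume_real_eq_intervalIntegral hmeas, hind,
      intervalIntegral.integral_comp_add_div _ hN0, smul_eq_mul]
    congr 2 <;> push_cast <;> ring
  have hint (a b : ℝ) : IntervalIntegrable (S.indicator (1 : ℝ → ℝ)) volume a b :=
    ⟨(integrable_const 1).indicator hS, (integrable_const 1).indicator hS⟩
  simp_rw [hterm, ← Finset.mul_sum]
  rw [intervalIntegral.sum_integral_adjacent_intervals (a := fun p : ℕ => (p / N : ℝ))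
    fun p _ => hint _ _, Nat.cast_zero, zero_div, div_self hN0,
    unitVolume_real_eq_intervalIntegral hS]

theorem unitVolume_real_le_of_forall_abs_sub_le {S : Set ℝ} {d : ℝ} (hd : 0 ≤ d)
    (h : ∀ u ∈ S ∩ Ico 0 1, ∀ v ∈ S ∩ Ico 0 1, |v - u| ≤ d) : unitVolume.real S ≤ d := by
  refine ENNReal.toReal_le_of_le_ofReal hd ?_
  rw [Measure.restrict_apply' measurableSet_Ico]
  refine (Real.volume_le_diam _).trans (Metric.ediam_le fun u hu v hv => ?_)
  rw [edist_dist, dist_comm, Real.dist_eq]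
  exact ENNReal.ofReal_le_ofReal (h u hu v hv)

theorem abs_sub_le_of_abs_le_of_le_abs {f f' : ℝ → ℝ} {K ε δ x y : ℝ}
    (hf : |f y - f x - f' x * (y - x)| ≤ K * (y - x) ^ 2) (hε : 0 < ε) (hx : |f x| ≤ δ)
    (hy : |f y| ≤ δ) (hx' : ε ≤ |f' x|) (hxy : 2 * K * |y - x| ≤ ε) : |y - x| ≤ 4 * δ / ε := by
  have hmul : |f' x| * |y - x| ≤ 2 * δ + K * |y - x| ^ 2 := by
    rw [← abs_mul, sq_abs]
    rw [abs_le] at *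
    constructor <;> linarith
  have hlow := mul_le_mul_of_nonneg_right hx' (abs_nonneg (y - x))
  have hquad := mul_le_mul_of_nonneg_right hxy (abs_nonneg (y - x))
  rw [le_div_iff₀ hε]
  linarith

theorem exists_unitVolume_real_sublevel_le {ε K : ℝ} (hε : 0 < ε) (hK : 0 ≤ K) :
    ∃ C > 0, ∀ f f' : ℝ → ℝ, (∀ u, HasDerivAt f (f' u) u) →
      (∀ u v, |f' v - f' u| ≤ K * |v - u|) → (∀ u, ε ≤ |f u| ∨ ε ≤ |f' u|) → ∀ δ > 0,
        unitVolume.real {u | |f u| ≤ δ} ≤ C * δ := by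
  obtain ⟨M, hM⟩ := exists_nat_gt (2 * K / ε)
  have hM0 : (0 : ℝ) < M := lt_of_le_of_lt (by positivity) hM
  have hM1 : 0 < M := by exact_mod_cast hM0
  rw [div_lt_iff₀ hε] at hM
  refine ⟨4 * M / ε, by positivity, fun f f' hf hf' hor δ hδ => ?_⟩
  rcases le_or_gt ε δ with hεδ | hδε
  · refine measureReal_le_one.trans ?_
    have : (1 : ℝ) ≤ M := by exact_mod_cast hM1
    rw [div_mul_eq_mul_div, le_div_iff₀ hε]
    nlinarith
  have hcont : Continuous f := continuous_iff_continuousAt.2 fun u => (hf u).continuousAt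
  have hbranch (p : ℕ) :
      unitVolume.real {u | ((p : ℝ) + u) / M ∈ {x | |f x| ≤ δ}} ≤ 4 * M / ε * δ := by
    refine unitVolume_real_le_of_forall_abs_sub_le (by positivity) fun u hu v hv => ?_
    have hscale : |(p + v) / M - (p + u) / M| = |v - u| / M := by
      rw [← sub_div, add_sub_add_left_eq_sub, abs_div, abs_of_pos hM0]
    have huv : |v - u| ≤ 1 := by
      rw [abs_le]
      constructor <;> linarith [hu.2.1, hu.2.2, hv.2.1, hv.2.2]
    have hclose : 2 * K * (|v - u| / M) ≤ ε := by
      rw [← mul_div_assoc, div_le_iff₀ hM0]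
      nlinarith
    have := abs_sub_le_of_abs_le_of_le_abs (abs_sub_sub_mul_le_sq hf hf' _ _) hε hu.1 hv.1
      ((hor _).resolve_left (hu.1.trans_lt hδε).not_ge) (hscale ▸ hclose)
    rw [hscale, div_le_iff₀ hM0] at this
    exact this.trans_eq (by ring)
  have hsum := sum_unitVolume_real_branch hM1
    (isClosed_le hcont.abs (continuous_const (y := δ))).measurableSet
  refine le_of_mul_le_mul_left (hsum.symm.trans_le ?_) hM0
  refine (Finset.sum_le_sum fun p _ => hbranch p).trans_eq ?_
  rw [Finset.sum_const, Finset.card_range, nsmul_eq_mul]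

/-! ### Counting close slopes -/

/-- The number of pairs of branches of multiplication by `N` along which the values of `G` are
`δ`-close, averaged over the unit interval. -/
def closePairs (G : ℝ → ℝ) (N : ℕ) (δ : ℝ) : ℝ :=
  ∑ p ∈ Finset.range N, ∑ q ∈ Finset.range N, unitVolume.real {u | |G (p + u) - G (q + u)| ≤ δ}

theorem closePairs_le_sq (G : ℝ → ℝ) (N : ℕ) (δ : ℝ) : closePairs G N δ ≤ (N : ℝ) ^ 2 := by
  refine (Finset.sum_le_sum fun p _ => Finset.sum_le_sum fun q _ => measureReal_le_one).trans_eq ?_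
  simp [sq]

theorem closePairs_pow_le_of_le (G : ℝ → ℝ) {b n N : ℕ} (hb : 0 < b) (hn : n ≤ N) {E : ℝ}
    (hE : 0 ≤ E) (δ : ℝ) :
    closePairs G (b ^ n) δ ≤ ((b : ℝ) ^ n) ^ 2 * (E + (b : ℝ) ^ N / b ^ n) := by
  have : (0 : ℝ) < b := Nat.cast_pos.2 hb
  refine (closePairs_le_sq _ _ δ).trans ?_
  rw [Nat.cast_pow]
  refine le_mul_of_one_le_right (by positivity) (le_add_of_nonneg_of_le hE ?_)
  rw [one_le_div (by positivity)]
  exact pow_le_pow_right₀ (by exact_mod_cast hb) hn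

theorem sum_range_mul (F : ℕ → ℝ) (b m : ℕ) :
    ∑ p ∈ Finset.range (b * m), F p
      = ∑ p ∈ Finset.range m, ∑ i ∈ Finset.range b, F (i + b * p) := by
  induction m with
  | zero => simp
  | succ m ih =>
    rw [Nat.mul_succ, Finset.sum_range_add, ih, Finset.sum_range_succ]
    simp_rw [add_comm (b * m)]

theorem sum_digits_unitVolume_real_le {G H : ℝ → ℝ} (hG : Continuous G) {b : ℕ} (hb : 0 < b)
    {c δ A : ℝ} (hc : 0 < c) (hA : 0 ≤ A) {p q : ℕ}
    (hsame : ∀ i : ℕ, ∀ u : ℝ, H ((i + b * p : ℕ) + u) - H ((i + b * q : ℕ) + u)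
      = c * (G (p + (i + u) / b) - G (q + (i + u) / b)))
    (hdiff : ∀ i < b, ∀ j < b, i ≠ j →
      unitVolume.real {u | |H ((i + b * p : ℕ) + u) - H ((j + b * q : ℕ) + u)| ≤ δ} ≤ A) :
    ∑ i ∈ Finset.range b, ∑ j ∈ Finset.range b,
      unitVolume.real {u | |H ((i + b * p : ℕ) + u) - H ((j + b * q : ℕ) + u)| ≤ δ}
      ≤ b ^ 2 * A + b * unitVolume.real {u | |G (p + u) - G (q + u)| ≤ δ / c} := by
  set S : Set ℝ := {u | |G (p + u) - G (q + u)| ≤ δ / c} with hS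
  have hSm : MeasurableSet S := (isClosed_le (by fun_prop) continuous_const).measurableSet
  have hpair (i j : ℕ) (hi : i ∈ Finset.range b) (hj : j ∈ Finset.range b) :
      unitVolume.real {u | |H ((i + b * p : ℕ) + u) - H ((j + b * q : ℕ) + u)| ≤ δ}
        ≤ A + if i = j then unitVolume.real {u | (i + u) / b ∈ S} else 0 := by
    split_ifs with hij
    · subst hij
      simp only [hsame, abs_mul, abs_of_pos hc]
      refine le_add_of_nonneg_of_le hA (le_of_eq ?_)
      simp only [hS, mem_ofPred_eq, le_div_iff₀' hc]
    · rw [add_zero]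
      exact hdiff i (Finset.mem_range.1 hi) j (Finset.mem_range.1 hj) hij
  refine (Finset.sum_le_sum fun i hi => Finset.sum_le_sum fun j hj => hpair i j hi hj).trans_eq ?_
  have hsum (i : ℕ) (hi : i ∈ Finset.range b) : ∑ j ∈ Finset.range b,
      (A + if i = j then unitVolume.real {u | (i + u) / b ∈ S} else 0)
        = b * A + unitVolume.real {u | (i + u) / b ∈ S} := by
    rw [Finset.sum_add_distrib, Finset.sum_ite_eq, if_pos hi, Finset.sum_const,
      Finset.card_range, nsmul_eq_mul]
  rw [Finset.sum_congr rfl hsum, Finset.sum_add_distrib, sum_unitVolume_real_branch hb hSm,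
    Finset.sum_const, Finset.card_range, nsmul_eq_mul, sq, mul_assoc]

theorem closePairs_mul_le {G H : ℝ → ℝ} (hG : Continuous G) {b : ℕ} (hb : 0 < b) {c : ℝ}
    (hc : 0 < c) (N : ℕ) {δ A : ℝ} (hA : 0 ≤ A)
    (hsame : ∀ i p q : ℕ, ∀ u : ℝ, H ((i + b * p : ℕ) + u) - H ((i + b * q : ℕ) + u)
      = c * (G (p + (i + u) / b) - G (q + (i + u) / b)))
    (hdiff : ∀ p q : ℕ, p % b ≠ q % b → unitVolume.real {u | |H (p + u) - H (q + u)| ≤ δ} ≤ A) :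
    closePairs H (b * N) δ ≤ ((b * N : ℕ) : ℝ) ^ 2 * A + b * closePairs G N (δ / c) := by
  have hmod (p q : ℕ) {i j : ℕ} (hi : i < b) (hj : j < b) (hij : i ≠ j) :
      (i + b * p) % b ≠ (j + b * q) % b := by
    simpa [Nat.add_mul_mod_self_left, Nat.mod_eq_of_lt hi, Nat.mod_eq_of_lt hj] using hij
  calc closePairs H (b * N) δ
      = ∑ p ∈ Finset.range N, ∑ q ∈ Finset.range N, ∑ i ∈ Finset.range b, ∑ j ∈ Finset.range b,
          unitVolume.real {u | |H ((i + b * p : ℕ) + u) - H ((j + b * q : ℕ) + u)| ≤ δ} := by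
        simp_rw [closePairs, sum_range_mul]
        exact Finset.sum_congr rfl fun p _ => Finset.sum_comm
    _ ≤ ∑ p ∈ Finset.range N, ∑ q ∈ Finset.range N,
          (b ^ 2 * A + b * unitVolume.real {u | |G (p + u) - G (q + u)| ≤ δ / c}) :=
        Finset.sum_le_sum fun p _ => Finset.sum_le_sum fun q _ =>
          sum_digits_unitVolume_real_le hG hb hc hA (fun i => hsame i p q)
            fun i hi j hj hij => hdiff _ _ (hmod p q hi hj hij)
    _ = ((b * N : ℕ) : ℝ) ^ 2 * A + b * closePairs G N (δ / c) := by
        simp only [closePairs, Finset.sum_add_distrib, ← Finset.mul_sum, Finset.sum_const,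
          Finset.card_range, nsmul_eq_mul, Nat.cast_mul]
        ring

theorem strongSlope_succ_sub_strongSlope_succ {b : ℕ} (hb : b ≠ 0) (c : ℝ) (n i p q : ℕ) (u : ℝ) :
    strongSlope b c (n + 1) ((i + b * p : ℕ) + u) - strongSlope b c (n + 1) ((i + b * q : ℕ) + u)
      = c * (strongSlope b c n (p + (i + u) / b) - strongSlope b c n (q + (i + u) / b)) := by
  have hb0 : (b : ℝ) ≠ 0 := by exact_mod_cast hb
  have hsplit (p : ℕ) : strongSlope b c (n + 1) ((i + b * p : ℕ) + u)
      = 2 * π * c * sin (2 * π * ((i + u) / b)) + c * strongSlope b c n (p + (i + u) / b) := by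
    have hdigit : ((i + b * p : ℕ) + u) / b = p + (i + u) / b := by
      push_cast
      field_simp
      ring
    rw [strongSlope, strongSlope, add_comm n, lacunarySum_add, lacunarySum_one, pow_one, pow_one,
      mul_div_assoc (2 * π), hdigit, mul_add (2 * π) (p : ℝ), add_comm (2 * π * p),
      mul_comm _ (p : ℝ), sin_add_nat_mul_two_pi]
    ring
  rw [hsplit, hsplit]
  ring

theorem IsTransversal.exists_unitVolume_real_le {b : ℕ} (hb : 2 ≤ b) {c : ℝ} (h0 : 0 ≤ c)
    (h1 : c ≤ 1) (hT : IsTransversal b c) :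
    ∃ C > 0, ∀ᶠ n in atTop, ∀ p q : ℕ, p % b ≠ q % b → ∀ δ > 0,
      unitVolume.real {u | |strongSlope b c n (p + u) - strongSlope b c n (q + u)| ≤ δ}
        ≤ C * δ := by
  have hb2 : (2 : ℝ) ≤ b := by exact_mod_cast hb
  obtain ⟨ε, hε, hT⟩ := hT
  obtain ⟨C, hC, hsub⟩ := exists_unitVolume_real_sublevel_le hε
    (by positivity : 0 ≤ 2 * (2 * π) ^ 3)
  refine ⟨C, hC, hT.mono fun n hn p q hpq => hsub _ _
    (fun u => ((hasDerivAt_strongSlope n (p + u)).comp_const_add _ u).fun_sub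
      ((hasDerivAt_strongSlope n (q + u)).comp_const_add _ u)) (fun u v => ?_) (hn p q hpq)⟩
  have hlip (p : ℕ) := abs_curvature_sub_le hb2 h0 h1 n (p + u) (p + v)
  simp only [add_sub_add_left_eq_sub] at hlip
  have hp := hlip p
  have hq := hlip q
  rw [abs_le] at hp hq ⊢
  constructor <;> linarith

theorem IsTransversal.exists_closePairs_le {b : ℕ} (hb : 2 ≤ b) {c : ℝ} (h0 : 0 < c) (h1 : c ≤ 1)
    (hbc : 1 < b * c) (hT : IsTransversal b c) :
    ∃ C > 0, ∃ B > 0, ∀ n : ℕ, ∀ δ > 0,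
      closePairs (strongSlope b c n) (b ^ n) δ ≤ ((b : ℝ) ^ n) ^ 2 * (C * δ + B / b ^ n) := by
  have : (1 : ℝ) ≤ b := by exact_mod_cast (by omega : 1 ≤ b)
  obtain ⟨C₀, hC₀, hfar⟩ := hT.exists_unitVolume_real_le hb h0.le h1
  obtain ⟨N, hN⟩ := eventually_atTop.1 hfar
  have hlt : (b * c)⁻¹ < 1 := inv_lt_one_of_one_lt₀ hbc
  obtain ⟨C, hC⟩ : ∃ C, C = C₀ / (1 - (b * c)⁻¹) := ⟨_, rfl⟩
  have hC0 : 0 < C := hC ▸ div_pos hC₀ (by linarith)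
  have hCeq : C₀ + C * (b * c)⁻¹ = C := by
    rw [eq_div_iff (by linarith)] at hC
    linarith
  have hsmall {n : ℕ} (hn : n ≤ N) (δ : ℝ) (hδ : 0 < δ) :=
    closePairs_pow_le_of_le (b := b) (strongSlope b c n) (by omega) hn (by positivity : 0 ≤ C * δ) δ
  refine ⟨C, hC0, (b : ℝ) ^ N, by positivity, fun n => ?_⟩
  rcases le_total n N with hn | hn
  · exact hsmall hn
  induction n, hn using Nat.le_induction with
  | base => exact hsmall le_rfl
  | succ n hn ih =>
    intro δ hδ
    have hstep := closePairs_mul_le (continuous_strongSlope b c n) (by omega) h0 (b ^ n)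
      (mul_nonneg hC₀.le hδ.le) (strongSlope_succ_sub_strongSlope_succ (by omega) c n)
      fun p q hpq => hN (n + 1) (by omega) p q hpq δ hδ
    rw [← pow_succ', Nat.cast_pow] at hstep
    calc closePairs (strongSlope b c (n + 1)) (b ^ (n + 1)) δ
        ≤ ((b : ℝ) ^ (n + 1)) ^ 2 * (C₀ * δ)
          + b * (((b : ℝ) ^ n) ^ 2 * (C * (δ / c) + (b : ℝ) ^ N / b ^ n)) :=
          hstep.trans (by gcongr; exact ih _ (by positivity))
      _ = ((b : ℝ) ^ (n + 1)) ^ 2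
          * ((C₀ + C * (b * c)⁻¹) * δ + (b : ℝ) ^ N / b ^ (n + 1)) := by
          field_simp
          ring
      _ = _ := by rw [hCeq]

theorem sum_measureReal_le_of_sum_indicator_le {Ω ι κ : Type*} [MeasurableSpace Ω] {μ : Measure Ω}
    (s : Finset ι) (t : Finset κ) {A : ι → Set Ω} {B : κ → Set Ω} {w : κ → ℝ}
    (hA : ∀ i ∈ s, MeasurableSet (A i)) (hA' : ∀ i ∈ s, μ (A i) ≠ ⊤)
    (hB : ∀ k ∈ t, MeasurableSet (B k)) (hB' : ∀ k ∈ t, μ (B k) ≠ ⊤)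
    (h : ∀ v, ∑ i ∈ s, (A i).indicator (1 : Ω → ℝ) v
      ≤ ∑ k ∈ t, w k * (B k).indicator (1 : Ω → ℝ) v) :
    ∑ i ∈ s, μ.real (A i) ≤ ∑ k ∈ t, w k * μ.real (B k) := by
  have hAint (i : ι) (hi : i ∈ s) : Integrable ((A i).indicator (1 : Ω → ℝ)) μ :=
    (integrable_indicator_iff (hA i hi)).2 (integrableOn_const (hA' i hi))
  have hBint (k : κ) (hk : k ∈ t) : Integrable (fun v => w k * (B k).indicator (1 : Ω → ℝ) v) μ :=
    ((integrable_indicator_iff (hB k hk)).2 (integrableOn_const (hB' k hk))).const_mul _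
  calc ∑ i ∈ s, μ.real (A i) = ∫ v, ∑ i ∈ s, (A i).indicator (1 : Ω → ℝ) v ∂μ := by
        rw [integral_finsetSum _ hAint]
        exact Finset.sum_congr rfl fun i hi => (integral_indicator_one (hA i hi)).symm
    _ ≤ ∫ v, ∑ k ∈ t, w k * (B k).indicator (1 : Ω → ℝ) v ∂μ :=
        integral_mono (integrable_finsetSum _ hAint) (integrable_finsetSum _ hBint) h
    _ = ∑ k ∈ t, w k * μ.real (B k) := by
        rw [integral_finsetSum _ hBint]
        refine Finset.sum_congr rfl fun k hk => ?_
        rw [integral_const_mul, integral_indicator_one (hB k hk)]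

theorem sum_measureReal_le_of_forall_card_le {Ω ι : Type*} [MeasurableSpace Ω] {μ : Measure Ω}
    [IsProbabilityMeasure μ] (s : Finset ι) {A H : ι → Set Ω} {B : Set Ω} {M : ℝ}
    (hA : ∀ i ∈ s, MeasurableSet (A i)) (hM : 0 ≤ M)
    (h : ∀ v ∉ B, ∀ t ⊆ s, (∀ i ∈ t, v ∈ A i ∧ v ∉ H i) → (t.card : ℝ) ≤ M) :
    ∑ i ∈ s, μ.real (A i) ≤ s.card * μ.real B + ∑ i ∈ s, μ.real (H i) + M := by
  set B' := toMeasurable μ B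
  set H' : ι → Set Ω := fun i => toMeasurable μ (H i)
  have hfree : ∑ i ∈ s, μ.real (A i \ (B' ∪ H' i)) ≤ M := by
    have hm (i : ι) (hi : i ∈ s) : MeasurableSet (A i \ (B' ∪ H' i)) :=
      (hA i hi).diff ((measurableSet_toMeasurable _ _).union (measurableSet_toMeasurable _ _))
    have := sum_measureReal_le_of_sum_indicator_le (μ := μ) s {()} (B := fun _ => univ)
      (w := fun _ => M) hm (fun _ _ => measure_ne_top _ _) (fun _ _ => .univ)
      (fun _ _ => measure_ne_top _ _) fun v => ?_
    · simpa using this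
    classical
    suffices ((s.filter fun i => v ∈ A i \ (B' ∪ H' i)).card : ℝ) ≤ M by
      simpa [indicator_apply, Finset.sum_boole] using this
    by_cases hv : v ∈ B'
    · simpa [hv] using hM
    refine h v (fun hB => hv (subset_toMeasurable _ _ hB)) _ (Finset.filter_subset _ _)
      fun i hi => ?_
    have := (Finset.mem_filter.1 hi).2
    exact ⟨this.1, fun hH => this.2 (Or.inr (subset_toMeasurable _ _ hH))⟩
  have hcover (i : ι) : μ.real (A i)
      ≤ μ.real B + μ.real (H i) + μ.real (A i \ (B' ∪ H' i)) := by
    have hsub : A i ⊆ (B' ∪ H' i) ∪ A i \ (B' ∪ H' i) := by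
      rw [union_sdiff_self]
      exact subset_union_right
    have hunion := measureReal_union_le (μ := μ) B' (H' i)
    simp only [B', H', measureReal_def, measure_toMeasurable] at hunion
    have := (measureReal_mono (μ := μ) hsub).trans (measureReal_union_le _ _)
    exact this.trans (by gcongr; exact hunion)
  refine (Finset.sum_le_sum fun i _ => hcover i).trans ?_
  rw [Finset.sum_add_distrib, Finset.sum_add_distrib, Finset.sum_const, nsmul_eq_mul]
  gcongr

/-- The points over which the value of `G` along branch `p` of multiplication by `N` is `δ`-close to
its value along more than `m` branches. -/
def crowded (G : ℝ → ℝ) (N : ℕ) (δ m : ℝ) (p : ℕ) : Set ℝ :=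
  {u | m < ((Finset.range N).filter fun q : ℕ => |G (p + u) - G (q + u)| ≤ δ).card}

theorem mul_sum_unitVolume_real_crowded_le {G : ℝ → ℝ} (hG : Continuous G) (N : ℕ) (δ : ℝ) {m : ℝ}
    (hm : 0 ≤ m) :
    m * ∑ p ∈ Finset.range N, unitVolume.real (crowded G N δ m p) ≤ closePairs G N δ := by
  rw [Finset.mul_sum]
  refine Finset.sum_le_sum fun p _ => ?_
  set A : ℕ → Set ℝ := fun q => {u | |G (p + u) - G (q + u)| ≤ δ}
  have hA (q : ℕ) : MeasurableSet (A q) :=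
    (isClosed_le (by fun_prop) continuous_const).measurableSet
  have hint (q : ℕ) : Integrable ((A q).indicator (1 : ℝ → ℝ)) unitVolume :=
    (integrable_const 1).indicator (hA q)
  have hmarkov := mul_meas_ge_le_integral_of_nonneg (μ := unitVolume)
    (ae_of_all _ fun u => Finset.sum_nonneg fun q (_ : q ∈ Finset.range N) =>
      indicator_nonneg (s := A q) (f := (1 : ℝ → ℝ)) (fun _ _ => zero_le_one) u)
    (integrable_finsetSum _ fun q _ => hint q) m
  rw [integral_finsetSum _ fun q _ => hint q] at hmarkov
  simp_rw [integral_indicator_one (hA _)] at hmarkov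
  refine le_trans (mul_le_mul_of_nonneg_left (measureReal_mono fun u hu => ?_) hm) hmarkov
  rw [crowded, mem_ofPred_eq] at hu
  simpa [A, indicator_apply] using hu.le

/-! ### Balls on the graph -/

/-- The points over which the graph of `W` lies in the closed ball of radius `r`, for the sup
metric, around the graph point over `x`. -/
def graphBall (W : ℝ → ℝ) (x r : ℝ) : Set ℝ :=
  (fun y => (y, W y)) ⁻¹' Metric.closedBall (x, W x) r

/-- The points within `r` of `u` over which the graph of `W` lies in the strip of vertical
half-width `w` around the line of slope `m` through the graph point over `u`. -/
def graphStrip (W : ℝ → ℝ) (u m r w : ℝ) : Set ℝ :=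
  {v | |v - u| ≤ r ∧ |W v - W u - m * (v - u)| ≤ w}

section graphBall

variable {W : ℝ → ℝ}

theorem mem_graphBall {x y r : ℝ} : y ∈ graphBall W x r ↔ |y - x| ≤ r ∧ |W y - W x| ≤ r := by
  simp [graphBall, Prod.dist_eq, Real.dist_eq]

theorem graphBall_subset_closedBall (W : ℝ → ℝ) (x r : ℝ) :
    graphBall W x r ⊆ Metric.closedBall x r :=
  fun _ hy => (mem_graphBall.1 hy).1

theorem volume_graphBall_ne_top (W : ℝ → ℝ) (x r : ℝ) : volume (graphBall W x r) ≠ ⊤ :=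
  measure_ne_top_of_subset (graphBall_subset_closedBall W x r) measure_closedBall_lt_top.ne

theorem volume_real_graphBall_mono (W : ℝ → ℝ) (x : ℝ) {r s : ℝ} (h : r ≤ s) :
    volume.real (graphBall W x r) ≤ volume.real (graphBall W x s) :=
  measureReal_mono (preimage_mono (Metric.closedBall_subset_closedBall h))
    (volume_graphBall_ne_top W x s)

theorem volume_real_graphBall_le (W : ℝ → ℝ) (x : ℝ) {r : ℝ} (hr : 0 ≤ r) :
    volume.real (graphBall W x r) ≤ 2 * r := by
  refine (measureReal_mono (graphBall_subset_closedBall W x r)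
    measure_closedBall_lt_top.ne).trans_eq ?_
  rw [measureReal_def, Real.volume_closedBall, ENNReal.toReal_ofReal (by positivity)]

theorem measurableSet_graphBall (hW : Continuous W) (x r : ℝ) :
    MeasurableSet (graphBall W x r) :=
  Metric.isClosed_closedBall.measurableSet.preimage (by fun_prop)

theorem measurable_volume_real_graphBall (hW : Continuous W) (r : ℝ) :
    Measurable fun x => volume.real (graphBall W x r) := by
  have : MeasurableSet {z : ℝ × ℝ | dist (z.2, W z.2) (z.1, W z.1) ≤ r} :=
    (isClosed_le (by fun_prop) continuous_const).measurableSet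
  exact (measurable_measure_prodMk_left this).ennreal_toReal

theorem measurableSet_graphStrip (hW : Continuous W) (u m r w : ℝ) :
    MeasurableSet (graphStrip W u m r w) :=
  ((isClosed_le (by fun_prop) (by fun_prop)).and
    (isClosed_le (by fun_prop) (by fun_prop))).measurableSet

theorem volume_graphStrip_ne_top (W : ℝ → ℝ) (u m r w : ℝ) :
    volume (graphStrip W u m r w) ≠ ⊤ :=
  measure_ne_top_of_subset (s := Metric.closedBall u r)
    (fun _ (hv : _ ∈ graphStrip W u m r w) => hv.1) measure_closedBall_lt_top.ne

theorem mem_graphBall_of_mem_graphStrip {u v m r w t L K : ℝ} (hv : v ∈ graphStrip W u m r w)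
    (hm : |m| ≤ L) (hK : 1 ≤ K) (ht : |v - u| ≤ t) (hw : w ≤ K * t) :
    v ∈ graphBall W u ((L + K) * t) := by
  have ht0 : 0 ≤ t := (abs_nonneg _).trans ht
  have hL : 0 ≤ L := (abs_nonneg _).trans hm
  refine mem_graphBall.2 ⟨ht.trans (le_mul_of_one_le_left ht0 (by linarith)), ?_⟩
  have hline : |m * (v - u)| ≤ L * t := by
    rw [abs_mul]
    gcongr
  have := abs_sub_abs_le_abs_sub (W v - W u) (m * (v - u))
  linarith [hv.2]

theorem abs_sub_mul_abs_sub_le_of_mem_graphStrip {u v m m' r w : ℝ}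
    (hv : v ∈ graphStrip W u m r w) (hv' : v ∈ graphStrip W u m' r w) :
    |m' - m| * |v - u| ≤ 2 * w := by
  have := abs_sub (W v - W u - m * (v - u)) (W v - W u - m' * (v - u))
  rw [sub_sub_sub_cancel_left, ← sub_mul, abs_mul] at this
  linarith [hv.2, hv'.2]

end graphBall

theorem volume_real_add_div_preimage {N : ℝ} (hN : 0 < N) (p : ℝ) (S : Set ℝ) :
    volume.real {u | (p + u) / N ∈ S} = N * volume.real S := by
  have : {u | (p + u) / N ∈ S} = (fun u => p + u) ⁻¹' ((· * N⁻¹) ⁻¹' S) := by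
    simp only [← div_eq_mul_inv]
    rfl
  rw [measureReal_def, this, measure_preimage_add, Real.volume_preimage_mul_right (by positivity),
    inv_inv, abs_of_pos hN, ENNReal.toReal_mul, ENNReal.toReal_ofReal hN.le, measureReal_def]

theorem pow_mul_volume_real_graphBall_le {b : ℕ} (hb : 2 ≤ b) {c : ℝ} (h0 : 0 < c) (h1 : c ≤ 1)
    (hbc : 1 < b * c) (n p : ℕ) (u : ℝ) :
    (b : ℝ) ^ n * volume.real (graphBall (Wc b (b * c)⁻¹) ((p + u) / (b : ℝ) ^ n) ((c / b) ^ n))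
      ≤ volume.real (graphStrip (Wc b (b * c)⁻¹) u (strongSlope b c n (p + u)) (c ^ n)
          ((1 + (2 * π) ^ 2) * (c ^ n) ^ 2)) := by
  have hb2 : (2 : ℝ) ≤ b := by exact_mod_cast hb
  have hbn : (0 : ℝ) < (b : ℝ) ^ n := by positivity
  rw [← volume_real_add_div_preimage hbn p]
  refine measureReal_mono (fun v hv => ?_) (volume_graphStrip_ne_top _ _ _ _ _)
  obtain ⟨hdist, hW⟩ := mem_graphBall.1 hv
  rw [← sub_div, add_sub_add_left_eq_sub, abs_div, abs_of_pos hbn, div_le_iff₀ hbn, div_pow,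
    div_mul_cancel₀ _ hbn.ne'] at hdist
  refine ⟨hdist, ?_⟩
  have hl1 : (b * c)⁻¹ < 1 := inv_lt_one_of_one_lt₀ hbc
  rw [Wc_div_pow (by omega) (by positivity) hl1, Wc_div_pow (by omega) (by positivity) hl1, inv_inv,
    Wc_natCast_add, Wc_natCast_add, ← mul_sub, abs_mul, abs_of_pos (by positivity), inv_pow,
    inv_mul_le_iff₀ (by positivity), ← mul_pow, show (b : ℝ) * c * (c / b) = c * c by field_simp,
    mul_pow, ← sq] at hW
  have htaylor := abs_lacunarySum_cos_sub_add_le hb2 h0.le h1 n (p + u) (p + v)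
  rw [add_sub_add_left_eq_sub] at htaylor
  have hsq : (2 * π) ^ 2 * (v - u) ^ 2 ≤ (2 * π) ^ 2 * (c ^ n) ^ 2 := by
    rw [← sq_abs (v - u)]
    gcongr
  rw [abs_le] at hW htaylor ⊢
  constructor <;> linarith

section strips

variable {W : ℝ → ℝ} {ι : Type*} {c K L Q u : ℝ} {n : ℕ} {s : Finset ι} {m : ι → ℝ}

theorem exists_le_pow_add_and_lt {t : ℝ} (h0 : 0 < c) (h1 : c < 1) (ht : t ≤ c ^ n) :
    ∃ k ≤ n, t ≤ c ^ (n + k) ∧ (k = n ∨ c ^ (n + k + 1) < t) := by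
  rcases le_or_gt t (c ^ (n + n)) with h | h
  · exact ⟨n, le_rfl, h, Or.inl rfl⟩
  · obtain ⟨j, hj, hj'⟩ := exists_nat_pow_near_of_lt_one (lt_trans (by positivity) h)
      (ht.trans (pow_le_one₀ h0.le h1.le)) h0 h1
    have hnj : n < j + 1 := (pow_lt_pow_iff_right_of_lt_one₀ h0 h1).1 (hj.trans_le ht)
    have hjn : j < n + n := (pow_lt_pow_iff_right_of_lt_one₀ h0 h1).1 (h.trans_le hj')
    obtain ⟨k, rfl⟩ : ∃ k, j = n + k := ⟨j - n, by omega⟩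
    exact ⟨k, by omega, hj', Or.inr hj⟩

-- Two strips through `v` have slopes at most `2 * K * (c ^ n) ^ 2 / |v - u|` apart, so the farther
-- `v` is from `u`, the fewer strips contain it.
theorem exists_card_le_of_forall_mem_graphStrip (h0 : 0 < c) (h1 : c < 1) {v : ℝ}
    (hs : s.Nonempty) (hcard : (s.card : ℝ) ≤ Q)
    (hsep : ∀ p ∈ s, ∀ k ≤ n,
      ((s.filter fun q => |m p - m q| ≤ 2 * K / c * c ^ k).card : ℝ) ≤ Q * c ^ k)
    (hv : ∀ p ∈ s, v ∈ graphStrip W u (m p) (c ^ n) (K * (c ^ n) ^ 2)) :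
    ∃ k ≤ n, |v - u| ≤ c ^ (n + k) ∧ (s.card : ℝ) ≤ Q * c ^ (n - k) := by
  obtain ⟨p, hp⟩ := hs
  obtain ⟨k, hk, hvk, hk'⟩ := exists_le_pow_add_and_lt h0 h1 (hv p hp).1
  refine ⟨k, hk, hvk, ?_⟩
  rcases hk' with rfl | hk'
  · simpa using hcard
  refine le_trans ?_ (hsep p hp (n - k) (Nat.sub_le _ _))
  rw [Finset.filter_true_of_mem]
  intro q hq
  have hclose : |m p - m q| * c ^ (n + k + 1) ≤ 2 * K / c * c ^ (n - k) * c ^ (n + k + 1) :=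
    calc |m p - m q| * c ^ (n + k + 1) ≤ |m p - m q| * |v - u| := by gcongr
      _ ≤ 2 * (K * (c ^ n) ^ 2) := abs_sub_mul_abs_sub_le_of_mem_graphStrip (hv q hq) (hv p hp)
      _ = 2 * K / c * c ^ (n - k) * c ^ (n + k + 1) := by
        rw [mul_assoc (2 * K / c), ← pow_add, show n - k + (n + k + 1) = n * 2 + 1 by omega,
          pow_succ c, pow_mul c]
        field_simp
  exact le_of_mul_le_mul_right hclose (by positivity)

theorem sum_volume_real_graphStrip_le (hW : Continuous W) (h0 : 0 < c) (h1 : c < 1) (hK : 1 ≤ K)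
    (hm : ∀ p ∈ s, |m p| ≤ L) (hcard : (s.card : ℝ) ≤ Q)
    (hsep : ∀ p ∈ s, ∀ k ≤ n,
      ((s.filter fun q => |m p - m q| ≤ 2 * K / c * c ^ k).card : ℝ) ≤ Q * c ^ k) :
    ∑ p ∈ s, volume.real (graphStrip W u (m p) (c ^ n) (K * (c ^ n) ^ 2))
      ≤ ∑ k ∈ Finset.range (n + 1),
          Q * c ^ (n - k) * volume.real (graphBall W u ((L + K) * c ^ (n + k))) := by
  have hQ : 0 ≤ Q := (Nat.cast_nonneg _).trans hcard
  refine sum_measureReal_le_of_sum_indicator_le s _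
    (fun p _ => measurableSet_graphStrip hW _ _ _ _) (fun p _ => volume_graphStrip_ne_top _ _ _ _ _)
    (fun k _ => measurableSet_graphBall hW _ _) (fun k _ => volume_graphBall_ne_top _ _ _)
    fun v => ?_
  have hnonneg (k : ℕ) (_ : k ∈ Finset.range (n + 1)) : 0 ≤ Q * c ^ (n - k)
      * (graphBall W u ((L + K) * c ^ (n + k))).indicator (1 : ℝ → ℝ) v :=
    mul_nonneg (by positivity) (indicator_nonneg (fun _ _ => zero_le_one) _)
  classical
  set t := s.filter fun p => v ∈ graphStrip W u (m p) (c ^ n) (K * (c ^ n) ^ 2) with ht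
  have hts : t ⊆ s := Finset.filter_subset _ _
  have htv (p : ι) (hp : p ∈ t) : v ∈ graphStrip W u (m p) (c ^ n) (K * (c ^ n) ^ 2) :=
    (Finset.mem_filter.1 hp).2
  have hsum : ∑ p ∈ s, (graphStrip W u (m p) (c ^ n) (K * (c ^ n) ^ 2)).indicator (1 : ℝ → ℝ) v
      = t.card := by
    simp [indicator_apply, ht]
  rw [hsum]
  rcases t.eq_empty_or_nonempty with he | hne
  · simpa [he] using Finset.sum_nonneg hnonneg
  obtain ⟨k, hk, hvk, hkcard⟩ := exists_card_le_of_forall_mem_graphStrip h0 h1 hne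
    ((Nat.cast_le.2 (Finset.card_le_card hts)).trans hcard)
    (fun p hp k hk => (Nat.cast_le.2 (Finset.card_le_card
      (Finset.filter_subset_filter _ hts))).trans (hsep p (hts hp) k hk)) htv
  obtain ⟨p, hp⟩ := hne
  have hwidth : K * (c ^ n) ^ 2 ≤ K * c ^ (n + k) := by
    rw [← pow_mul]
    gcongr K * ?_
    exact pow_le_pow_of_le_one h0.le h1.le (by omega)
  have hball : v ∈ graphBall W u ((L + K) * c ^ (n + k)) :=
    mem_graphBall_of_mem_graphStrip (htv p hp) (hm p (hts hp)) hK hvk hwidth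
  refine le_trans ?_ (Finset.single_le_sum hnonneg (Finset.mem_range.2 (Nat.lt_succ_of_le hk)))
  rwa [indicator_of_mem hball, Pi.one_apply, mul_one]

theorem pow_sub_mul_rpow_le {d : ℝ} (h0 : 0 < c) (h1 : c ≤ 1) (hd : 1 ≤ d) {k : ℕ} (hk : k ≤ n) :
    c ^ (n - k) * (c ^ (n + k)) ^ d ≤ (c ^ n) ^ (1 + d) := by
  have hpow : (c ^ k) ^ d ≤ c ^ k := by
    simpa using Real.rpow_le_rpow_of_exponent_ge (by positivity) (pow_le_one₀ h0.le h1) hd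
  calc c ^ (n - k) * (c ^ (n + k)) ^ d = c ^ (n - k) * (c ^ k) ^ d * (c ^ n) ^ d := by
        rw [pow_add, Real.mul_rpow (by positivity) (by positivity)]
        ring
    _ ≤ c ^ (n - k) * c ^ k * (c ^ n) ^ d := by gcongr
    _ = (c ^ n) ^ (1 + d) := by
        rw [← pow_add, Nat.sub_add_cancel hk, Real.rpow_one_add' (by positivity) (by linarith)]

theorem sum_volume_real_graphStrip_le_of_graphBall_le (hW : Continuous W) (h0 : 0 < c) (h1 : c < 1)
    (hK : 1 ≤ K) (hm : ∀ p ∈ s, |m p| ≤ L) (hcard : (s.card : ℝ) ≤ Q)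
    (hsep : ∀ p ∈ s, ∀ k ≤ n,
      ((s.filter fun q => |m p - m q| ≤ 2 * K / c * c ^ k).card : ℝ) ≤ Q * c ^ k)
    {C d : ℝ} (hC : 0 ≤ C) (hd : 1 ≤ d)
    (hball : ∀ k ≤ n,
      volume.real (graphBall W u ((L + K) * c ^ (n + k))) ≤ C * (c ^ (n + k)) ^ d) :
    ∑ p ∈ s, volume.real (graphStrip W u (m p) (c ^ n) (K * (c ^ n) ^ 2))
      ≤ (n + 1) * (Q * C * (c ^ n) ^ (1 + d)) := by
  have hQ : 0 ≤ Q := (Nat.cast_nonneg _).trans hcard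
  refine (sum_volume_real_graphStrip_le hW h0 h1 hK hm hcard hsep).trans ?_
  have hterm (k : ℕ) (hk : k ∈ Finset.range (n + 1)) :
      Q * c ^ (n - k) * volume.real (graphBall W u ((L + K) * c ^ (n + k)))
        ≤ Q * C * (c ^ n) ^ (1 + d) := by
    have hk : k ≤ n := Nat.lt_succ_iff.1 (Finset.mem_range.1 hk)
    calc _ ≤ Q * c ^ (n - k) * (C * (c ^ (n + k)) ^ d) := by
          gcongr
          exact hball k hk
      _ = Q * C * (c ^ (n - k) * (c ^ (n + k)) ^ d) := by ring
      _ ≤ Q * C * (c ^ n) ^ (1 + d) := by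
          gcongr
          exact pow_sub_mul_rpow_le h0 h1.le hd hk
  refine (Finset.sum_le_sum hterm).trans_eq ?_
  simp

end strips

/-! ### Small balls at most points -/

/-- The points around which the graph ball of radius `r` has mass more than `θ`. -/
def heavyPoints (W : ℝ → ℝ) (r θ : ℝ) : Set ℝ :=
  {x | θ < volume.real (graphBall W x r)}

/-- The points around which some graph ball of radius `r ≤ R` has mass more than `C * r ^ d`. -/
def badPoints (W : ℝ → ℝ) (d C R : ℝ) : Set ℝ :=
  ⋃ r ∈ Ioc 0 R, heavyPoints W r (C * r ^ d)

/-- Graph balls of radius `r` have mass `O(r ^ d)`, with an exceptional set of centres that shrinks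
polynomially with the scale. Here `d` plays the role of a lower bound for the local dimension. -/
def SmallBalls (W : ℝ → ℝ) (d : ℝ) : Prop :=
  ∃ C > (0 : ℝ), ∃ η > (0 : ℝ), ∀ R > (0 : ℝ), unitVolume.real (badPoints W d C R) ≤ C * R ^ η

theorem mem_badPoints {W : ℝ → ℝ} {d C R x : ℝ} :
    x ∈ badPoints W d C R ↔ ∃ r ∈ Ioc 0 R, C * r ^ d < volume.real (graphBall W x r) := by
  simp only [badPoints, heavyPoints, mem_iUnion, exists_prop, mem_ofPred_eq]

theorem measurableSet_heavyPoints {W : ℝ → ℝ} (hW : Continuous W) (r θ : ℝ) :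
    MeasurableSet (heavyPoints W r θ) :=
  measurableSet_lt measurable_const (measurable_volume_real_graphBall hW r)

theorem smallBalls_one (W : ℝ → ℝ) : SmallBalls W 1 := by
  refine ⟨2, two_pos, 1, one_pos, fun R hR => ?_⟩
  have : badPoints W 1 2 R = ∅ := by
    refine eq_empty_of_forall_notMem fun x hx => ?_
    obtain ⟨r, hr, hlt⟩ := mem_badPoints.1 hx
    rw [Real.rpow_one] at hlt
    exact hlt.not_ge (volume_real_graphBall_le W x hr.1.le)
  rw [this, measureReal_empty]
  positivity

theorem badPoints_subset_iUnion_heavyPoints (W : ℝ → ℝ) {ρ C R d : ℝ} (hρ0 : 0 < ρ) (hρ1 : ρ < 1)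
    (hd : 0 ≤ d) (hC : (ρ ^ d)⁻¹ ≤ C) {m : ℕ} (hR : R ≤ ρ ^ m) :
    badPoints W d C R ⊆ ⋃ j : ℕ, heavyPoints W (ρ ^ (m + j)) ((ρ ^ (m + j)) ^ d) := by
  intro x hx
  obtain ⟨r, ⟨hr0, hrR⟩, hr⟩ := mem_badPoints.1 hx
  obtain ⟨n, hn, hn'⟩ := exists_nat_pow_near_of_lt_one hr0
    (hrR.trans (hR.trans (pow_le_one₀ hρ0.le hρ1.le))) hρ0 hρ1
  have hmn : m < n + 1 :=
    (pow_lt_pow_iff_right_of_lt_one₀ hρ0 hρ1).1 (hn.trans_le (hrR.trans hR))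
  obtain ⟨j, rfl⟩ := Nat.exists_eq_add_of_le (Nat.lt_succ_iff.1 hmn)
  refine mem_iUnion.2 ⟨j, lt_of_le_of_lt ?_ (hr.trans_le (volume_real_graphBall_mono W x hn'))⟩
  have hρd : 0 < ρ ^ d := by positivity
  have hC0 : 0 ≤ C := (inv_nonneg.2 hρd.le).trans hC
  calc (ρ ^ (m + j)) ^ d = (ρ ^ d)⁻¹ * (ρ ^ (m + j + 1)) ^ d := by
        rw [pow_succ, Real.mul_rpow (by positivity) hρ0.le]
        field_simp
    _ ≤ C * r ^ d := by gcongr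

theorem measureReal_iUnion_add_le_of_geometric {Ω : Type*} [MeasurableSpace Ω] {μ : Measure Ω}
    [IsFiniteMeasure μ] {S : ℕ → Set Ω} {A σ : ℝ} (hσ0 : 0 ≤ σ) (hσ1 : σ < 1)
    (h : ∀ n, μ.real (S n) ≤ A * σ ^ n) (m : ℕ) :
    μ.real (⋃ j, S (m + j)) ≤ A / (1 - σ) * σ ^ m := by
  have hA : 0 ≤ A := by simpa using measureReal_nonneg.trans (h 0)
  have : 0 < 1 - σ := by linarith
  have hsum : HasSum (fun j => A * σ ^ (m + j)) (A / (1 - σ) * σ ^ m) := by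
    have := (hasSum_geometric_of_lt_one hσ0 hσ1).mul_left (A * σ ^ m)
    simpa only [pow_add, mul_assoc, div_eq_mul_inv, mul_comm (1 - σ)⁻¹] using this
  refine ENNReal.toReal_le_of_le_ofReal (by positivity) ((measure_iUnion_le _).trans ?_)
  rw [← hsum.tsum_eq, ENNReal.ofReal_tsum_of_nonneg (fun j => by positivity) hsum.summable]
  refine ENNReal.tsum_le_tsum fun j => ?_
  rw [← ofReal_measureReal]
  exact ENNReal.ofReal_le_ofReal (h (m + j))

theorem SmallBalls.of_geometric {W : ℝ → ℝ} {ρ σ A d : ℝ} (hρ0 : 0 < ρ) (hρ1 : ρ < 1)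
    (hσ0 : 0 < σ) (hσ1 : σ < 1) (hd : 0 ≤ d)
    (h : ∀ n : ℕ, unitVolume.real (heavyPoints W (ρ ^ n) ((ρ ^ n) ^ d)) ≤ A * σ ^ n) :
    SmallBalls W d := by
  have hA : 0 ≤ A := by simpa using measureReal_nonneg.trans (h 0)
  have hσ : 0 < 1 - σ := by linarith
  set η : ℝ := Real.logb ρ σ
  have hη : 0 < η := Real.logb_pos_of_base_lt_one hρ0 hρ1 hσ0 hσ1
  have hρη : ρ ^ η = σ := Real.rpow_logb hρ0 hρ1.ne hσ0
  set C : ℝ := 1 + (ρ ^ d)⁻¹ + A / (1 - σ) / σ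
  have hρd : 0 ≤ (ρ ^ d)⁻¹ := by positivity
  have hAσ : 0 ≤ A / (1 - σ) / σ := by positivity
  refine ⟨C, by positivity, η, hη, fun R hR => ?_⟩
  rcases le_or_gt 1 R with hR1 | hR1
  · exact measureReal_le_one.trans
      (one_le_mul_of_one_le_of_one_le (by linarith) (Real.one_le_rpow hR1 hη.le))
  obtain ⟨m, hm, hm'⟩ := exists_nat_pow_near_of_lt_one hR hR1.le hρ0 hρ1
  have hσR : σ ^ (m + 1) ≤ R ^ η := by
    rw [← hρη, Real.rpow_pow_comm hρ0.le]
    gcongr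
  calc unitVolume.real (badPoints W d C R)
      ≤ unitVolume.real (⋃ j : ℕ, heavyPoints W (ρ ^ (m + j)) ((ρ ^ (m + j)) ^ d)) :=
        measureReal_mono
          (badPoints_subset_iUnion_heavyPoints W hρ0 hρ1 hd (by linarith) hm')
    _ ≤ A / (1 - σ) * σ ^ m :=
        measureReal_iUnion_add_le_of_geometric
          (S := fun n => heavyPoints W (ρ ^ n) ((ρ ^ n) ^ d)) hσ0.le hσ1 h m
    _ = A / (1 - σ) / σ * σ ^ (m + 1) := by
        rw [pow_succ]
        field_simp
    _ ≤ C * R ^ η := by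
        gcongr
        linarith

section heavy

variable {W G : ℝ → ℝ} {N n : ℕ} {c d C K L Q r u θ : ℝ}

theorem card_mul_le_of_forall_mem_heavyPoints (hW : Continuous W) (h0 : 0 < c) (h1 : c < 1)
    (hK : 1 ≤ K) (hC : 0 ≤ C) (hd : 1 ≤ d) (hG : ∀ x, |G x| ≤ L) (hQ : N ≤ Q)
    (hstrip : ∀ p : ℕ, N * volume.real (graphBall W ((p + u) / N) r)
      ≤ volume.real (graphStrip W u (G (p + u)) (c ^ n) (K * (c ^ n) ^ 2)))
    (hu : u ∉ badPoints W d C ((L + K) * c ^ n)) {t : Finset ℕ} (ht : t ⊆ Finset.range N)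
    (hheavy : ∀ p ∈ t, (p + u) / N ∈ heavyPoints W r θ)
    (hsparse : ∀ p ∈ t, u ∉ ⋃ k ∈ Finset.range (n + 1),
      crowded G N (2 * K / c * c ^ k) (Q * c ^ k) p) :
    t.card * (N * θ) ≤ (n + 1) * (Q * (C * (L + K) ^ d) * (c ^ n) ^ (1 + d)) := by
  have hLK : 0 < L + K := by linarith [(abs_nonneg _).trans (hG 0)]
  have hcard : (t.card : ℝ) ≤ Q := by
    refine le_trans ?_ hQ
    simpa using Finset.card_le_card ht
  have hsep (p : ℕ) (hp : p ∈ t) (k : ℕ) (hk : k ≤ n) :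
      ((t.filter fun q : ℕ => |G (p + u) - G (q + u)| ≤ 2 * K / c * c ^ k).card : ℝ)
        ≤ Q * c ^ k := by
    have := hsparse p hp
    simp only [mem_iUnion, exists_prop, not_exists, not_and] at this
    exact (Nat.cast_le.2 (Finset.card_le_card (Finset.filter_subset_filter _ ht))).trans
      (not_lt.1 (this k (Finset.mem_range.2 (Nat.lt_succ_of_le hk))))
  have hball (k : ℕ) : volume.real (graphBall W u ((L + K) * c ^ (n + k)))
      ≤ C * (L + K) ^ d * (c ^ (n + k)) ^ d := by
    rw [mul_assoc, ← Real.mul_rpow hLK.le (by positivity)]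
    refine not_lt.1 fun hlt => hu (mem_badPoints.2 ⟨_, ⟨by positivity, ?_⟩, hlt⟩)
    gcongr (L + K) * ?_
    exact pow_le_pow_of_le_one h0.le h1.le (Nat.le_add_right n k)
  have hle (p : ℕ) (hp : p ∈ t) :
      N * θ ≤ volume.real (graphStrip W u (G (p + u)) (c ^ n) (K * (c ^ n) ^ 2)) :=
    le_trans (by gcongr; exact (hheavy p hp).le) (hstrip p)
  calc (t.card : ℝ) * (N * θ)
      ≤ ∑ p ∈ t, volume.real (graphStrip W u (G (p + u)) (c ^ n) (K * (c ^ n) ^ 2)) := by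
        rw [← nsmul_eq_mul]
        exact Finset.card_nsmul_le_sum t _ _ hle
    _ ≤ _ := sum_volume_real_graphStrip_le_of_graphBall_le hW h0 h1 hK (fun p _ => hG _) hcard
        hsep (by positivity) hd fun k _ => hball k

theorem mul_unitVolume_real_heavyPoints_le (hW : Continuous W) (h0 : 0 < c) (h1 : c < 1)
    (hK : 1 ≤ K) (hC : 0 ≤ C) (hd : 1 ≤ d) (hN : 0 < N) (hθ : 0 < θ) (hG : ∀ x, |G x| ≤ L)
    (hQ : N ≤ Q) (hstrip : ∀ (p : ℕ) (u : ℝ), N * volume.real (graphBall W ((p + u) / N) r)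
      ≤ volume.real (graphStrip W u (G (p + u)) (c ^ n) (K * (c ^ n) ^ 2))) :
    N * unitVolume.real (heavyPoints W r θ)
      ≤ N * unitVolume.real (badPoints W d C ((L + K) * c ^ n))
        + ∑ p ∈ Finset.range N, unitVolume.real (⋃ k ∈ Finset.range (n + 1),
            crowded G N (2 * K / c * c ^ k) (Q * c ^ k) p)
        + (n + 1) * (Q * (C * (L + K) ^ d) * (c ^ n) ^ (1 + d)) / (N * θ) := by
  have hLK : 0 < L + K := by linarith [(abs_nonneg _).trans (hG 0)]
  have hQ0 : 0 ≤ Q := (Nat.cast_nonneg _).trans hQ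
  have hmeas : MeasurableSet (heavyPoints W r θ) := measurableSet_heavyPoints hW r θ
  have hsum := sum_measureReal_le_of_forall_card_le (μ := unitVolume) (Finset.range N)
    (A := fun p : ℕ => {u | (p + u) / N ∈ heavyPoints W r θ})
    (H := fun p => ⋃ k ∈ Finset.range (n + 1), crowded G N (2 * K / c * c ^ k) (Q * c ^ k) p)
    (B := badPoints W d C ((L + K) * c ^ n))
    (M := (n + 1) * (Q * (C * (L + K) ^ d) * (c ^ n) ^ (1 + d)) / (N * θ))
    (fun p _ => hmeas.preimage (by fun_prop)) (by positivity) fun u hu t ht htu => by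
      rw [le_div_iff₀ (by positivity)]
      exact card_mul_le_of_forall_mem_heavyPoints hW h0 h1 hK hC hd hG hQ
        (fun p => hstrip p u) hu ht (fun p hp => (htu p hp).1) fun p hp => (htu p hp).2
  rwa [sum_unitVolume_real_branch hN hmeas, Finset.card_range] at hsum

theorem mul_unitVolume_real_heavyPoints_le_of_mul_sq_eq {σ : ℝ} (hW : Continuous W) (h0 : 0 < c)
    (h1 : c < 1) (hK : 1 ≤ K) (hC : 0 ≤ C) (hd : 1 ≤ d) (hN : 0 < N) (hθ : 0 < θ)
    (hG : ∀ x, |G x| ≤ L) (hσ0 : 0 < σ) (hσ1 : σ ≤ 1) (hσ : N * θ * σ ^ 2 = (c ^ n) ^ (1 + d))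
    (hstrip : ∀ (p : ℕ) (u : ℝ), N * volume.real (graphBall W ((p + u) / N) r)
      ≤ volume.real (graphStrip W u (G (p + u)) (c ^ n) (K * (c ^ n) ^ 2))) :
    N * unitVolume.real (heavyPoints W r θ)
      ≤ N * unitVolume.real (badPoints W d C ((L + K) * c ^ n))
        + ∑ p ∈ Finset.range N, unitVolume.real (⋃ k ∈ Finset.range (n + 1),
            crowded G N (2 * K / c * c ^ k) (N / σ * c ^ k) p)
        + N * ((n + 1) * σ * (C * (L + K) ^ d)) := by
  have hQ : N ≤ N / σ := le_div_self (Nat.cast_nonneg N) hσ0 hσ1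
  refine (mul_unitVolume_real_heavyPoints_le hW h0 h1 hK hC hd hN hθ hG hQ hstrip).trans_eq ?_
  rw [← hσ]
  field_simp

end heavy

section improve

variable {b : ℕ} {c : ℝ}

theorem IsTransversal.exists_sum_unitVolume_real_crowded_le (hb : 2 ≤ b) (h0 : 0 < c) (h1 : c ≤ 1)
    (hbc : 1 < b * c) (hT : IsTransversal b c) {a : ℝ} (ha : 0 < a) :
    ∃ C > 0, ∀ τ > 0, ∀ n : ℕ, ∀ k ≤ n, ∑ p ∈ Finset.range (b ^ n), unitVolume.real
      (crowded (strongSlope b c n) (b ^ n) (a * c ^ k) ((b : ℝ) ^ n / τ ^ n * c ^ k) p)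
      ≤ (b : ℝ) ^ n * (τ ^ n * C) := by
  obtain ⟨C, hC, B, hB, hpairs⟩ := hT.exists_closePairs_le hb h0 h1 hbc
  refine ⟨C * a + B, by positivity, fun τ hτ n k hk => ?_⟩
  have : (0 : ℝ) < b := by exact_mod_cast (by omega : 0 < b)
  have hinv : ((b : ℝ) ^ n)⁻¹ ≤ c ^ k := by
    refine le_trans ?_ (pow_le_pow_of_le_one h0.le h1 hk)
    rw [inv_le_iff_one_le_mul₀' (by positivity), ← mul_pow]
    exact one_le_pow₀ hbc.le
  have hm : 0 < (b : ℝ) ^ n / τ ^ n * c ^ k := by positivity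
  refine le_of_mul_le_mul_left ?_ hm
  calc _ ≤ closePairs (strongSlope b c n) (b ^ n) (a * c ^ k) :=
        mul_sum_unitVolume_real_crowded_le (continuous_strongSlope b c n) _ _ hm.le
    _ ≤ ((b : ℝ) ^ n) ^ 2 * (C * (a * c ^ k) + B * ((b : ℝ) ^ n)⁻¹) :=
        hpairs n _ (by positivity)
    _ ≤ ((b : ℝ) ^ n) ^ 2 * (C * (a * c ^ k) + B * c ^ k) := by gcongr
    _ = _ := by field_simp

theorem IsTransversal.exists_sum_unitVolume_real_biUnion_crowded_le (hb : 2 ≤ b) (h0 : 0 < c)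
    (h1 : c ≤ 1) (hbc : 1 < b * c) (hT : IsTransversal b c) {a : ℝ} (ha : 0 < a) :
    ∃ C > 0, ∀ τ > 0, ∀ n : ℕ, ∑ p ∈ Finset.range (b ^ n), unitVolume.real
      (⋃ k ∈ Finset.range (n + 1),
        crowded (strongSlope b c n) (b ^ n) (a * c ^ k) ((b : ℝ) ^ n / τ ^ n * c ^ k) p)
      ≤ (b : ℝ) ^ n * ((n + 1) * τ ^ n * C) := by
  obtain ⟨C, hC, hcrowded⟩ := hT.exists_sum_unitVolume_real_crowded_le hb h0 h1 hbc ha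
  refine ⟨C, hC, fun τ hτ n => ?_⟩
  refine (Finset.sum_le_sum fun p _ => measureReal_biUnion_finset_le _ _).trans ?_
  rw [Finset.sum_comm]
  refine (Finset.sum_le_sum fun k hk => hcrowded τ hτ n k
    (Nat.lt_succ_iff.1 (Finset.mem_range.1 hk))).trans_eq ?_
  rw [Finset.sum_const, Finset.card_range, nsmul_eq_mul]
  push_cast
  ring

theorem pow_mul_pow_rpow_mul_sq_pow {a c d d' τ : ℝ} (ha : 0 ≤ a) (hc : 0 ≤ c)
    (h : a * (c / a) ^ d' * τ ^ 2 = c ^ (1 + d)) (n : ℕ) :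
    a ^ n * ((c / a) ^ n) ^ d' * (τ ^ n) ^ 2 = (c ^ n) ^ (1 + d) := by
  rw [← Real.rpow_pow_comm hc, ← Real.rpow_pow_comm (div_nonneg hc ha), ← h]
  ring

theorem IsTransversal.exists_unitVolume_real_heavyPoints_le (hb : 2 ≤ b) (h0 : 0 < c) (h1 : c < 1)
    (hbc : 1 < b * c) (hT : IsTransversal b c) {d d' τ : ℝ} (hd : 1 ≤ d) (hτ0 : 0 < τ)
    (hτ1 : τ ≤ 1) (hdd : b * (c / b) ^ d' * τ ^ 2 = c ^ (1 + d))
    (hS : SmallBalls (Wc b (b * c)⁻¹) d) :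
    ∃ A ≥ 0, ∃ B ≥ 0, ∃ η > (0 : ℝ), ∀ n : ℕ,
      unitVolume.real (heavyPoints (Wc b (b * c)⁻¹) ((c / b) ^ n) (((c / b) ^ n) ^ d'))
        ≤ A * (c ^ η) ^ n + B * ((n + 1) * τ ^ n) := by
  set W := Wc b (b * c)⁻¹
  set K : ℝ := 1 + (2 * π) ^ 2
  set L : ℝ := 2 * π * (c / (1 - c))
  have hb0 : (0 : ℝ) < b := by exact_mod_cast (by omega : 0 < b)
  have hK : 1 ≤ K := le_add_of_nonneg_right (by positivity)
  have : 0 ≤ L := mul_nonneg (by positivity) (div_nonneg h0.le (by linarith))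
  have hW : Continuous W := continuous_Wc b (by positivity) (inv_lt_one_of_one_lt₀ hbc)
  obtain ⟨C, hC, η, hη, hbad⟩ := hS
  obtain ⟨C', hC', hcrowded⟩ := hT.exists_sum_unitVolume_real_biUnion_crowded_le hb h0 h1.le hbc
    (a := 2 * K / c) (by positivity)
  refine ⟨C * (L + K) ^ η, by positivity, C * (L + K) ^ d + C', by positivity, η, hη,
    fun n => ?_⟩
  have hbn : 0 < (b : ℝ) ^ n := by positivity
  have hτn : 0 < τ ^ n := by positivity
  set θ : ℝ := ((c / b) ^ n) ^ d'
  have hθ0 : 0 < θ := by positivity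
  have hθ : (b : ℝ) ^ n * θ * (τ ^ n) ^ 2 = (c ^ n) ^ (1 + d) :=
    pow_mul_pow_rpow_mul_sq_pow hb0.le h0.le hdd n
  have hheavy := mul_unitVolume_real_heavyPoints_le_of_mul_sq_eq (N := b ^ n) hW h0 h1 hK
    hC.le hd (pow_pos (by omega) n) hθ0 (abs_strongSlope_le h0.le h1 n) hτn
    (pow_le_one₀ hτ0.le hτ1) (by rwa [Nat.cast_pow]) fun p u => by
      rw [Nat.cast_pow]
      exact pow_mul_volume_real_graphBall_le hb h0 h1.le hbc n p u
  have hB := hbad ((L + K) * c ^ n) (by positivity)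
  rw [Real.mul_rpow (by positivity) (by positivity), ← Real.rpow_pow_comm h0.le] at hB
  rw [Nat.cast_pow] at hheavy
  refine le_of_mul_le_mul_left (hheavy.trans ?_) hbn
  calc _ ≤ (b : ℝ) ^ n * (C * ((L + K) ^ η * (c ^ η) ^ n)) + (b : ℝ) ^ n * ((n + 1) * τ ^ n * C')
        + (b : ℝ) ^ n * ((n + 1) * τ ^ n * (C * (L + K) ^ d)) := by
        gcongr
        exact hcrowded τ hτ0 n
    _ = _ := by ring

theorem exists_add_mul_le_geometric {A B ρ τ : ℝ} (hA : 0 ≤ A) (hB : 0 ≤ B) (hρ0 : 0 ≤ ρ)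
    (hρ1 : ρ < 1) (hτ0 : 0 < τ) (hτ1 : τ < 1) :
    ∃ M, ∃ σ ∈ Ioo (0 : ℝ) 1, ∀ n : ℕ, A * ρ ^ n + B * ((n + 1) * τ ^ n) ≤ M * σ ^ n := by
  have hsqrt1 : √τ < 1 := by rwa [Real.sqrt_lt' one_pos, one_pow]
  obtain ⟨M, hM⟩ := ((tendsto_self_mul_const_pow_of_lt_one (Real.sqrt_nonneg τ) hsqrt1).add
    (tendsto_pow_atTop_nhds_zero_of_lt_one (Real.sqrt_nonneg τ) hsqrt1)).bddAbove_range
  have hM (n : ℕ) : (n + 1) * √τ ^ n ≤ M := by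
    rw [add_one_mul]
    exact hM ⟨n, rfl⟩
  refine ⟨A + B * M, max ρ √τ, ⟨lt_max_of_lt_right (Real.sqrt_pos.2 hτ0), max_lt hρ1 hsqrt1⟩,
    fun n => ?_⟩
  calc A * ρ ^ n + B * ((n + 1) * τ ^ n)
      = A * ρ ^ n + B * ((n + 1) * √τ ^ n * √τ ^ n) := by
        rw [mul_assoc (_ + _), ← mul_pow, Real.mul_self_sqrt hτ0.le]
    _ ≤ A * max ρ √τ ^ n + B * (M * max ρ √τ ^ n) := by
        gcongr
        · exact le_max_left _ _
        · exact (by positivity : (0 : ℝ) ≤ _).trans (hM n)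
        · exact hM n
        · exact le_max_right _ _
    _ = _ := by ring

theorem SmallBalls.improve (hb : 2 ≤ b) (h0 : 0 < c) (h1 : c < 1) (hbc : 1 < b * c)
    (hT : IsTransversal b c) {d d' : ℝ} (hd : 1 ≤ d) (hd' : 0 ≤ d')
    (hdd : c ^ (1 + d) < b * (c / b) ^ d') (hS : SmallBalls (Wc b (b * c)⁻¹) d) :
    SmallBalls (Wc b (b * c)⁻¹) d' := by
  have hb1 : (1 : ℝ) < b := by exact_mod_cast hb
  have hpos : 0 < b * (c / b) ^ d' := by positivity
  set τ : ℝ := √(c ^ (1 + d) / (b * (c / b) ^ d'))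
  have hτ0 : 0 < τ := by positivity
  have hτ1 : τ < 1 := by rwa [Real.sqrt_lt' one_pos, one_pow, div_lt_one hpos]
  have hτ : b * (c / b) ^ d' * τ ^ 2 = c ^ (1 + d) := by
    rw [Real.sq_sqrt (by positivity), mul_div_cancel₀ _ hpos.ne']
  obtain ⟨A, hA, B, hB, η, hη, hheavy⟩ :=
    hT.exists_unitVolume_real_heavyPoints_le hb h0 h1 hbc hd hτ0 hτ1.le hτ hS
  obtain ⟨M, σ, ⟨hσ0, hσ1⟩, hM⟩ := exists_add_mul_le_geometric hA hB (by positivity)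
    (Real.rpow_lt_one h0.le h1 hη) hτ0 hτ1
  exact .of_geometric (by positivity) ((div_lt_one (by positivity)).2 (h1.trans hb1)) hσ0 hσ1 hd'
    fun n => (hheavy n).trans (hM n)

theorem inv_mul_rpow_one_sub {a : ℝ} (ha : 0 < a) (D : ℝ) :
    (a * a ^ (1 - D))⁻¹ = a ^ (D - 2) := by
  rw [mul_comm, ← Real.rpow_add_one ha.ne', ← Real.rpow_neg ha.le]
  ring_nf

-- With `c = b ^ (1 - D)`, `SmallBalls.improve` can multiply the defect `D - d` by any factor larger
-- than `1 - 1 / D`.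
theorem IsTransversal.smallBalls_sub_mul_pow (hb : 2 ≤ b) {D : ℝ} (hD1 : 1 < D) (hD2 : D < 2)
    (hT : IsTransversal b ((b : ℝ) ^ (1 - D))) (k : ℕ) :
    SmallBalls (Wc b ((b : ℝ) ^ (D - 2))) (D - (D - 1) * (1 - 1 / (2 * D)) ^ k) := by
  have hb1 : (1 : ℝ) < b := by exact_mod_cast hb
  have hb0 : (0 : ℝ) < b := by linarith
  have hc1 : (b : ℝ) ^ (1 - D) < 1 := Real.rpow_lt_one_of_one_lt_of_neg hb1 (by linarith)
  have hbc : 1 < b * (b : ℝ) ^ (1 - D) := by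
    rw [← inv_inv (_ * _), inv_mul_rpow_one_sub hb0]
    exact (one_lt_inv₀ (by positivity)).2 (Real.rpow_lt_one_of_one_lt_of_neg hb1 (by linarith))
  set q : ℝ := 1 - 1 / (2 * D)
  have hDq : D * q = D - 1 / 2 := by
    simp only [q]
    field_simp
  have hq0 : 0 ≤ q := sub_nonneg.2 ((div_le_one (by linarith)).2 (by linarith))
  have hq1 : q ≤ 1 := sub_le_self _ (by positivity)
  induction k with
  | zero => simpa using smallBalls_one _
  | succ k ih =>
    have hqk (j : ℕ) : (D - 1) * q ^ j ≤ D - 1 :=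
      mul_le_of_le_one_right (by linarith) (pow_le_one₀ hq0 hq1)
    rw [← inv_mul_rpow_one_sub hb0] at ih ⊢
    refine ih.improve hb (by positivity) hc1 hbc hT (by linarith [hqk k])
      (by linarith [hqk (k + 1)]) ?_
    rw [← Real.rpow_sub_one hb0.ne', ← Real.rpow_mul hb0.le, ← Real.rpow_mul hb0.le,
      ← Real.rpow_one_add' hb0.le (by nlinarith [hqk (k + 1)])]
    refine Real.rpow_lt_rpow_of_exponent_lt hb1 ?_
    have hdefect : D * ((D - 1) * q ^ (k + 1)) = (D - 1) * q ^ k * (D - 1 / 2) := by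
      rw [← hDq]
      ring
    have : 0 < q ^ k := pow_pos (by nlinarith) k
    nlinarith [mul_pos (sub_pos.2 hD1) this]

end improve

/-! ### Hausdorff dimension -/

theorem le_dimH_of_measure_closedBall_le {X : Type*} [MetricSpace X] [MeasurableSpace X]
    [BorelSpace X] {ν : Measure X} {E : Set X} {C : ENNReal} {d R : ℝ} (hd : 0 ≤ d) (hC : C ≠ ⊤)
    (hR : 0 < R)
    (h : ∀ x ∈ E, ∀ r ∈ Icc 0 R, ν (Metric.closedBall x r) ≤ C * ENNReal.ofReal r ^ d)
    (hE : ν E ≠ 0) : ENNReal.ofReal d ≤ dimH E := by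
  set ν' : Measure X := (C + 1)⁻¹ • ν.restrict E
  have hC1 : C + 1 ≠ ⊤ := ENNReal.add_ne_top.2 ⟨hC, ENNReal.one_ne_top⟩
  have hν' : ν' ≤ Measure.hausdorffMeasure d := by
    refine Measure.le_hausdorffMeasure d ν' (ENNReal.ofReal R) (ENNReal.ofReal_pos.2 hR)
      fun s hs => ?_
    have hfin : Metric.ediam (closure s) ≠ ⊤ := by
      rw [Metric.ediam_closure]
      exact ne_top_of_le_ne_top ENNReal.ofReal_ne_top hs
    have hdiam : ENNReal.ofReal (Metric.diam (closure s)) = Metric.ediam s := by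
      rw [Metric.diam, ENNReal.ofReal_toReal hfin, Metric.ediam_closure]
    have hle : ν (closure s ∩ E) ≤ C * Metric.ediam s ^ d := by
      rcases (closure s ∩ E).eq_empty_or_nonempty with he | ⟨x, hxs, hxE⟩
      · simp [he]
      rw [← hdiam]
      refine le_trans (measure_mono fun y hy => ?_)
        (h x hxE _ ⟨Metric.diam_nonneg, (ENNReal.ofReal_le_ofReal_iff hR.le).1 (hdiam.trans_le hs)⟩)
      exact Metric.dist_le_diam_of_mem' hfin hy.1 hxs
    calc ν' s ≤ (C + 1)⁻¹ * ν (closure s ∩ E) := by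
          rw [← Measure.restrict_apply isClosed_closure.measurableSet]
          exact measure_mono subset_closure
      _ ≤ (C + 1)⁻¹ * ((C + 1) * Metric.ediam s ^ d) := by
          gcongr
          exact hle.trans (by gcongr; exact le_self_add)
      _ = Metric.ediam s ^ d := by
          rw [← mul_assoc, ENNReal.inv_mul_cancel (by simp) hC1, one_mul]
  refine le_dimH_of_hausdorffMeasure_ne_zero (d := d.toNNReal) fun h0 => ?_
  rw [Real.coe_toNNReal d hd] at h0
  have hν'E : ν' E = 0 := le_antisymm (h0 ▸ hν' E) bot_le
  simp [ν', hC1, hE] at hν'E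

theorem volume_real_graphBall_le_of_notMem_badPoints {W : ℝ → ℝ} {d C R x r : ℝ} (hd : 0 < d)
    (hx : x ∉ badPoints W d C R) (hr : r ∈ Icc 0 R) :
    volume.real (graphBall W x r) ≤ C * r ^ d := by
  rcases hr.1.eq_or_lt with rfl | hr0
  · simpa [Real.zero_rpow hd.ne'] using volume_real_graphBall_le W x le_rfl
  · exact not_lt.1 fun hlt => hx (mem_badPoints.2 ⟨r, ⟨hr0, hr.2⟩, hlt⟩)

theorem SmallBalls.le_dimH_graph {W : ℝ → ℝ} (hW : Continuous W) {d : ℝ} (hd : 0 < d)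
    (hS : SmallBalls W d) :
    ENNReal.ofReal d ≤ dimH ((fun x => (x, W x)) '' Ico (0 : ℝ) 1) := by
  obtain ⟨C, hC, η, hη, hbad⟩ := hS
  obtain ⟨R, hR0, hR⟩ : ∃ R > (0 : ℝ), C * R ^ η < 1 := by
    refine ⟨(2 * C)⁻¹ ^ η⁻¹, by positivity, ?_⟩
    rw [Real.rpow_inv_rpow (by positivity) hη.ne']
    field_simp
    norm_num
  set f : ℝ → ℝ × ℝ := fun x => (x, W x)
  have hf : Measurable f := measurable_id.prodMk hW.measurable
  set E : Set ℝ := Ico 0 1 \ badPoints W d C R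
  have hball (x : ℝ) (hx : x ∈ E) (r : ℝ) (hr : r ∈ Icc 0 R) :
      unitVolume.map f (Metric.closedBall (f x) r) ≤ ENNReal.ofReal C * ENNReal.ofReal r ^ d := by
    rw [Measure.map_apply hf measurableSet_closedBall, ENNReal.ofReal_rpow_of_nonneg hr.1 hd.le,
      ← ENNReal.ofReal_mul hC.le]
    refine (Measure.restrict_apply_le _ _).trans (?_ : volume (graphBall W x r) ≤ _)
    rw [← ENNReal.ofReal_toReal (volume_graphBall_ne_top W x r)]
    exact ENNReal.ofReal_le_ofReal (volume_real_graphBall_le_of_notMem_badPoints hd hx.2 hr)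
  have hE : unitVolume.map f (f '' E) ≠ 0 := by
    intro h0
    have hE0 : unitVolume E = 0 := measure_mono_null (subset_preimage_image f E)
      (le_antisymm (h0 ▸ Measure.le_map_apply hf.aemeasurable _) bot_le)
    have hIco : unitVolume.real (Ico 0 1) ≤ unitVolume.real (E ∪ badPoints W d C R) :=
      measureReal_mono fun x hx => by by_cases hxB : x ∈ badPoints W d C R <;> simp [E, hx, hxB]
    have hunion := measureReal_union_le (μ := unitVolume) E (badPoints W d C R)
    rw [measureReal_def _ E, hE0, ENNReal.toReal_zero, zero_add] at hunion
    rw [measureReal_restrict_apply_self, Real.volume_real_Ico, sub_zero, max_eq_left zero_le_one]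
      at hIco
    linarith [hbad R hR0]
  exact (le_dimH_of_measure_closedBall_le hd.le ENNReal.ofReal_ne_top hR0
    (forall_mem_image.2 hball) hE).trans (dimH_mono (image_mono sdiff_subset))

/-- The square number `j` in a pile of squares of side `1 / N` standing over the column
`[i / N, (i + 1) / N]`, the bottom of the pile being `δ` below the graph of `f` at `i / N`. -/
def stackedSquare (f : ℝ → ℝ) (N : ℕ) (δ : ℝ) (i j : ℕ) : Set (ℝ × ℝ) :=
  Icc ((i : ℝ) / N) (i / N + 1 / N) ×ˢ Icc (f (i / N) - δ + j / N) (f (i / N) - δ + j / N + 1 / N)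

theorem ediam_stackedSquare_le (f : ℝ → ℝ) (N : ℕ) (δ : ℝ) (i j : ℕ) :
    Metric.ediam (stackedSquare f N δ i j) ≤ ENNReal.ofReal (1 / N) := by
  refine Metric.ediam_le fun p hp q hq => ?_
  rw [edist_dist]
  have h1 := Real.dist_le_of_mem_Icc hp.1 hq.1
  have h2 := Real.dist_le_of_mem_Icc hp.2 hq.2
  exact ENNReal.ofReal_le_ofReal (max_le (by linarith) (by linarith))

theorem mem_Icc_floor_mul_div {N : ℕ} (hN : 0 < N) {x : ℝ} (hx : 0 ≤ x) :
    x ∈ Icc ((⌊x * N⌋₊ : ℝ) / N) (⌊x * N⌋₊ / N + 1 / N) := by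
  have hN' : (0 : ℝ) < N := Nat.cast_pos.2 hN
  rw [mem_Icc, div_le_iff₀ hN', ← add_div, le_div_iff₀ hN']
  exact ⟨Nat.floor_le (by positivity), (Nat.lt_floor_add_one _).le⟩

theorem graph_subset_iUnion_stackedSquare {f : ℝ → ℝ} {N : ℕ} {δ : ℝ} (hN : 0 < N)
    (h : ∀ x ∈ Ico (0 : ℝ) 1, ∀ y ∈ Ico (0 : ℝ) 1, |x - y| ≤ 1 / N → |f x - f y| ≤ δ) :
    (fun x => (x, f x)) '' Ico (0 : ℝ) 1
      ⊆ ⋃ i : Fin N × Fin (⌊2 * δ * N⌋₊ + 1), stackedSquare f N δ i.1 i.2 := by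
  rintro _ ⟨x, hx, rfl⟩
  have hN' : (0 : ℝ) < N := Nat.cast_pos.2 hN
  set i := ⌊x * N⌋₊
  have hi : i < N := (Nat.floor_lt (mul_nonneg hx.1 hN'.le)).2 (mul_lt_of_lt_one_left hN' hx.2)
  have hxi := mem_Icc_floor_mul_div hN hx.1
  have hcol : (i : ℝ) / N ∈ Ico (0 : ℝ) 1 := ⟨by positivity, hxi.1.trans_lt hx.2⟩
  have hosc := abs_le.1 (h x hx _ hcol (by rw [abs_of_nonneg] <;> linarith [hxi.1, hxi.2]))
  set y : ℝ := f x - f (i / N) + δ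
  have hj : ⌊y * N⌋₊ < ⌊2 * δ * N⌋₊ + 1 :=
    Nat.lt_succ_of_le (Nat.floor_le_floor (by gcongr; linarith))
  have hyj := mem_Icc_floor_mul_div hN (by linarith : 0 ≤ y)
  refine mem_iUnion.2 ⟨(⟨i, hi⟩, ⟨_, hj⟩), hxi, ?_⟩
  constructor <;> dsimp only <;> linarith [hyj.1, hyj.2]

theorem sum_ediam_stackedSquare_rpow_le (f : ℝ → ℝ) {K r : ℝ} (hK : 0 ≤ K) (hr : r ≤ 1) {N : ℕ}
    (hN : 0 < N) :
    ∑ i : Fin N × Fin (⌊2 * (K * (1 / N) ^ r) * N⌋₊ + 1),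
        Metric.ediam (stackedSquare f N (K * (1 / N) ^ r) i.1 i.2) ^ (2 - r)
      ≤ ENNReal.ofReal (2 * K + 1) := by
  have hN' : (0 : ℝ) < N := Nat.cast_pos.2 hN
  set m := ⌊2 * (K * (1 / N : ℝ) ^ r) * N⌋₊ + 1
  have hm : (m : ℝ) ≤ (2 * K + 1) * (N : ℝ) ^ (1 - r) := by
    have hfloor : (m : ℝ) ≤ 2 * (K * (1 / N : ℝ) ^ r) * N + 1 := by
      push_cast [m]
      gcongr
      exact Nat.floor_le (by positivity)
    have hone : (1 : ℝ) ≤ (N : ℝ) ^ (1 - r) :=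
      one_le_rpow (by exact_mod_cast hN) (by linarith)
    have hpow : (1 / N : ℝ) ^ r * N = (N : ℝ) ^ (1 - r) := by
      rw [one_div, inv_rpow hN'.le, rpow_sub hN', rpow_one]
      ring
    linear_combination hfloor + 2 * K * hpow + hone
  calc _ ≤ ∑ _i : Fin N × Fin m, ENNReal.ofReal ((1 / N) ^ (2 - r)) := by
        refine Finset.sum_le_sum fun i _ => ?_
        rw [← ENNReal.ofReal_rpow_of_nonneg (by positivity) (by linarith)]
        exact ENNReal.rpow_le_rpow (ediam_stackedSquare_le _ _ _ _ _) (by linarith)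
    _ = ENNReal.ofReal (N * m * (1 / N) ^ (2 - r)) := by
        rw [Finset.sum_const, nsmul_eq_mul, ENNReal.ofReal_mul (by positivity),
          Finset.card_univ, Fintype.card_prod, Fintype.card_fin, Fintype.card_fin,
          ← ENNReal.ofReal_natCast, Nat.cast_mul]
    _ ≤ ENNReal.ofReal (2 * K + 1) := by
        refine ENNReal.ofReal_le_ofReal ?_
        rw [one_div, inv_rpow hN'.le, ← div_eq_mul_inv, div_le_iff₀ (by positivity)]
        calc (N : ℝ) * m ≤ N * ((2 * K + 1) * (N : ℝ) ^ (1 - r)) := by gcongr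
          _ = (2 * K + 1) * (N : ℝ) ^ (2 - r) := by
            rw [mul_left_comm, ← rpow_one_add' hN'.le (by linarith)]
            ring_nf

theorem dimH_graph_le_of_holderOnWith {f : ℝ → ℝ} {K r : NNReal} (hr : r ≤ 1)
    (hf : HolderOnWith K r f (Ico 0 1)) :
    dimH ((fun x => (x, f x)) '' Ico (0 : ℝ) 1) ≤ ENNReal.ofReal (2 - r) := by
  have hr1 : (r : ℝ) ≤ 1 := hr
  have hdiam : Tendsto (fun N : ℕ => ENNReal.ofReal (1 / N)) atTop (nhds 0) := by
    simpa using ENNReal.tendsto_ofReal tendsto_one_div_atTop_nhds_zero_nat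
  have hcover : ∀ᶠ N : ℕ in atTop, (fun x => (x, f x)) '' Ico (0 : ℝ) 1
      ⊆ ⋃ i : Fin N × Fin (⌊2 * (K * (1 / N : ℝ) ^ (r : ℝ)) * N⌋₊ + 1),
        stackedSquare f N (K * (1 / N) ^ (r : ℝ)) i.1 i.2 := by
    filter_upwards [eventually_gt_atTop 0] with N hN
    exact graph_subset_iUnion_stackedSquare hN fun x hx y hy hxy => hf.dist_le_of_le hx hy hxy
  have hsum := (eventually_gt_atTop 0).mono fun N hN =>
    sum_ediam_stackedSquare_rpow_le f K.coe_nonneg hr1 hN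
  have hH := Measure.hausdorffMeasure_le_liminf_sum (2 - r : ℝ) _ _ hdiam
    (fun N (i : Fin N × Fin (⌊2 * (K * (1 / N : ℝ) ^ (r : ℝ)) * N⌋₊ + 1)) =>
      stackedSquare f N (K * (1 / N) ^ (r : ℝ)) i.1 i.2)
    (Eventually.of_forall fun N i => ediam_stackedSquare_le f N _ i.1 i.2) hcover
  refine dimH_le_of_hausdorffMeasure_ne_top (d := (2 - r : ℝ).toNNReal) ?_
  rw [Real.coe_toNNReal _ (by linarith)]
  exact ne_top_of_le_ne_top ENNReal.ofReal_ne_top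
    (hH.trans ((liminf_le_liminf hsum).trans (liminf_const _).le))

theorem holderOnWith_of_dist_le_geometric {X Y : Type*} [MetricSpace X] [PseudoMetricSpace Y]
    {f : X → Y} {s : Set X} {q M : ℝ} {r : NNReal} (hq0 : 0 < q) (hq1 : q < 1)
    (hs : ∀ x ∈ s, ∀ y ∈ s, dist x y ≤ 1)
    (hf : ∀ n : ℕ, ∀ x ∈ s, ∀ y ∈ s, dist x y ≤ q ^ n → dist (f x) (f y) ≤ M * (q ^ (r : ℝ)) ^ n) :
    HolderOnWith (M / q ^ (r : ℝ)).toNNReal r f s := by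
  intro x hx y hy
  obtain rfl | hxy := eq_or_ne x y
  · simp only [edist_self, zero_le]
  have hM : 0 ≤ M := by simpa using dist_nonneg.trans (hf 0 x hx x hx (by simp))
  have hdist : dist (f x) (f y) ≤ M / q ^ (r : ℝ) * dist x y ^ (r : ℝ) := by
    obtain ⟨n, hn, hn'⟩ := exists_nat_pow_near_of_lt_one (dist_pos.2 hxy) (hs x hx y hy) hq0 hq1
    calc dist (f x) (f y) ≤ M * (q ^ (r : ℝ)) ^ n := hf n x hx y hy hn'
      _ = M / q ^ (r : ℝ) * (q ^ (n + 1)) ^ (r : ℝ) := by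
        rw [rpow_pow_comm hq0.le, pow_succ, mul_rpow (by positivity) hq0.le]
        field_simp
      _ ≤ M / q ^ (r : ℝ) * dist x y ^ (r : ℝ) := by gcongr
  rw [edist_dist, edist_dist, ENNReal.ofReal_rpow_of_nonneg dist_nonneg r.coe_nonneg,
    ← ENNReal.ofReal_coe_nnreal, Real.coe_toNNReal _ (by positivity),
    ← ENNReal.ofReal_mul (by positivity)]
  exact ENNReal.ofReal_le_ofReal hdist

theorem exists_abs_Wc_sub_le_mul_pow {b : ℕ} {l : ℝ} (h0 : 0 < l) (h1 : l < 1) (hbl : 1 < b * l) :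
    ∃ M : ℝ, ∀ (n : ℕ) (x y : ℝ),
      |x - y| ≤ (b : ℝ)⁻¹ ^ n → |Wc b l x - Wc b l y| ≤ M * l ^ n := by
  refine ⟨2 * π * (l⁻¹ / b / (1 - l⁻¹ / b)) + 2 * (1 - l)⁻¹, fun n x y hxy => ?_⟩
  have hb : (0 : ℝ) < b := pos_of_mul_pos_left (by linarith) h0.le
  have hlb : l⁻¹ / b < 1 := by
    rw [div_lt_one hb, inv_lt_iff_one_lt_mul₀ h0]
    exact hbl
  have hrescale (z : ℝ) : Wc b l z
      = l ^ n * (lacunarySum cos b l⁻¹ n (b ^ n * z) + Wc b l (b ^ n * z)) := by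
    rw [← Wc_div_pow (by exact_mod_cast hb.ne') h0 h1, mul_div_cancel_left₀ z (by positivity)]
  have hdist : |(b : ℝ) ^ n * x - b ^ n * y| ≤ 1 := by
    rw [← mul_sub, abs_mul, abs_of_pos (by positivity : (0 : ℝ) < b ^ n), ← le_div_iff₀']
    · rwa [one_div, ← inv_pow]
    · positivity
  have hsmooth := abs_lacunarySum_sub_le (x := l⁻¹) hasDerivAt_cos
    (fun y => (abs_neg _).trans_le (abs_sin_le_one y)) (by positivity) hlb n (b ^ n * y) (b ^ n * x)
  have hrough := abs_sub (Wc b l (b ^ n * x)) (Wc b l (b ^ n * y))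
  rw [hrescale x, hrescale y, ← mul_sub, abs_mul, abs_of_pos (by positivity), mul_comm,
    add_sub_add_comm]
  gcongr
  refine (abs_add_le _ _).trans (add_le_add (hsmooth.trans ?_) (hrough.trans ?_))
  · exact mul_le_of_le_one_right (by have := sub_pos.2 hlb; positivity) hdist
  · linarith [abs_Wc_le b h0.le h1 (b ^ n * x), abs_Wc_le b h0.le h1 (b ^ n * y)]

theorem exists_holderOnWith_Wc {b : ℕ} (hb : 2 ≤ b) {r : NNReal} (hr0 : 0 < r) (hr1 : r < 1) :
    ∃ K : NNReal, HolderOnWith K r (Wc b ((b : ℝ) ^ (-r : ℝ))) (Ico 0 1) := by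
  have hb1 : (1 : ℝ) < b := by exact_mod_cast hb
  have h1 : (b : ℝ) ^ (-r : ℝ) < 1 := rpow_lt_one_of_one_lt_of_neg hb1 (neg_lt_zero.2 hr0)
  have hbl : 1 < b * (b : ℝ) ^ (-r : ℝ) := by
    have : 0 < 1 + (-r : ℝ) := by linarith [NNReal.coe_lt_one.2 hr1]
    rw [← rpow_one_add' (by positivity) this.ne']
    exact one_lt_rpow hb1 this
  obtain ⟨M, hM⟩ := exists_abs_Wc_sub_le_mul_pow (by positivity) h1 hbl
  refine ⟨_, holderOnWith_of_dist_le_geometric (M := M) (q := (b : ℝ)⁻¹) (by positivity)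
    (inv_lt_one_of_one_lt₀ hb1) (fun x hx y hy => ?_) fun n x _ y _ hxy => ?_⟩
  · rw [Real.dist_eq, abs_le]
    constructor <;> linarith [hx.1, hx.2, hy.1, hy.2]
  · rw [inv_rpow (by positivity), ← rpow_neg (by positivity)]
    exact hM n x y hxy

theorem dimH_graph_Wc_of_isTransversal {b : ℕ} (hb : 2 ≤ b) {D : ℝ} (hD1 : 1 < D) (hD2 : D < 2)
    (hT : IsTransversal b ((b : ℝ) ^ (1 - D))) :
    dimH ((fun x => (x, Wc b ((b : ℝ) ^ (D - 2)) x)) '' Ico (0 : ℝ) 1) = ENNReal.ofReal D := by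
  have hb1 : (1 : ℝ) < b := by exact_mod_cast hb
  apply le_antisymm
  · lift 2 - D to NNReal using sub_nonneg.2 hD2.le with r hr
    have hr0 : 0 < r := by rw [← NNReal.coe_pos]; linarith
    have hr1 : r < 1 := by rw [← NNReal.coe_lt_one]; linarith
    obtain ⟨K, hK⟩ := exists_holderOnWith_Wc hb hr0 hr1
    have := dimH_graph_le_of_holderOnWith hr1.le hK
    rwa [hr, neg_sub, sub_sub_cancel] at this
  · have hW : Continuous (Wc b ((b : ℝ) ^ (D - 2))) :=
      continuous_Wc b (by positivity) (rpow_lt_one_of_one_lt_of_neg hb1 (by linarith))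
    have hq : 1 - 1 / (2 * D) ∈ Ico (0 : ℝ) 1 :=
      ⟨sub_nonneg.2 (div_le_one_of_le₀ (by linarith) (by linarith)), sub_lt_self 1 (by positivity)⟩
    have hlim : Tendsto (fun k : ℕ => D - (D - 1) * (1 - 1 / (2 * D)) ^ k) atTop (nhds D) := by
      simpa using ((tendsto_pow_atTop_nhds_zero_of_lt_one hq.1 hq.2).const_mul (D - 1)).const_sub D
    refine le_of_tendsto (ENNReal.tendsto_ofReal hlim) (Eventually.of_forall fun k => ?_)
    refine SmallBalls.le_dimH_graph hW ?_ (hT.smallBalls_sub_mul_pow hb hD1 hD2 k)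
    have : (1 - 1 / (2 * D)) ^ k ≤ 1 := pow_le_one₀ hq.1 hq.2.le
    nlinarith

theorem stmt2_general (b : ℕ) (hb : 2 ≤ b) (l : ℝ) (hl : l ∈ Set.Ioo (1 / (b : ℝ)) 1)
    (hneg : hBBR b l < 0) :
    dimH ((fun x => (x, Wc b l x)) '' Set.Ico (0 : ℝ) 1)
      = ENNReal.ofReal (2 + Real.log l / Real.log b) := by
  have hb1 : (1 : ℝ) < b := by exact_mod_cast hb
  have hb0 : (0 : ℝ) < b := by linarith
  have h0 : 0 < l := lt_trans (by positivity) hl.1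
  set D := 2 + Real.log l / Real.log b
  have hD : Real.logb b l = D - 2 := by rw [← Real.log_div_log, add_sub_cancel_left]
  have hlD : (b : ℝ) ^ (D - 2) = l := by rw [← hD, rpow_logb hb0 hb1.ne' h0]
  have hD1 : 1 < D := by
    have : -1 < Real.logb b l := by
      rw [lt_logb_iff_rpow_lt hb1 h0, rpow_neg_one, ← one_div]
      exact hl.1
    linarith
  have hD2 : D < 2 := by linarith [logb_neg hb1 h0 hl.2]
  have hT : IsTransversal b ((b : ℝ) ^ (1 - D)) := by
    refine isTransversal_of_hBBR_neg hb (by positivity)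
      (rpow_lt_one_of_one_lt_of_neg hb1 (by linarith)) ?_
    rwa [inv_mul_rpow_one_sub hb0, hlD]
  rw [← hlD]
  exact dimH_graph_Wc_of_isTransversal hb hD1 hD2 hT

/-- If `b ≥ 2` is an integer, `λ ∈ (1/b, 1)` and `h_b(μ) < 0` for all `μ ∈ [λ, 1)`, then the graph
of the classical Weierstrass function `W_{λ,b}` has Hausdorff dimension `2 + log λ / log b`. -/
theorem stmt2 (b : ℕ) (hb : 2 ≤ b) (l : ℝ) (hl : l ∈ Set.Ioo (1 / (b : ℝ)) 1)
    (hneg : ∀ μ : ℝ, l ≤ μ → μ < 1 → hBBR b μ < 0) :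
    dimH ((fun x => (x, Wc b l x)) '' Set.Ico (0 : ℝ) 1)
      = ENNReal.ofReal (2 + Real.log l / Real.log b) :=
  stmt2_general b hb l hl (hneg l le_rfl hl.2)
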